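/- There exists a constant C_p > 0 depending only on p such that for all t ∈ [0,1], sup_{x ∈ ℝ} | P( S_n / √( t·⟨S⟩_n + (1 − t)·[S]_n ) ≤ x ) − Φ(x) | ≤ C_p · N_n^{1/(2p+1)}. (This interpolates between the Berry–Esseen bound for the normalized martingale S_n/√⟨S⟩_n at t = 1 and for the self-normalized martingale S_n/√[S]_n at t = 0.) -/

import Mathlib

open MeasureTheory Filter Finset

/-- The standard normal distribution function
`Φ(x) = (2π)^{-1/2} ∫_{-∞}^x e^{-u²/2} du`. -/
noncomputable def stdNormalCDF (x : ℝ) : ℝ :=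
  ∫ u in Set.Iic x, (Real.sqrt (2 * Real.pi))⁻¹ * Real.exp (-u ^ 2 / 2)

/-!
Put `ε ^ (2 * p + 1) = N`; the distance to the normal law has to be bounded by a multiple of `ε`.

Suppose first that the total conditional variance is at most `1 + ε ^ 2`, and measure lengths in
units of `ε`. The normal probability `Φ (s / √v)` at position `s` with remaining variance `v`,
lowered by `κ v^(-b) (1 + s² / v)^(-m)` with `1 / 2 < m < b`, decreases along the martingale in
mean by at most the moments of order `2 * p` of the increments: the correction decays in `v`
faster than its spatial profile spreads, and the surplus pays for the Taylor remainders. Comparing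
the initial value with the final one, at a reserve `v ≥ L`, bounds the Kolmogorov distance `D` by
`D / 2 + C ε`, because the final correction is small for large `L` and charges an interval of
length of order `ε` in proportion to `D + ε`. Hence `D ≤ 2 C ε`. Stopping before the conditional
variance exceeds `1 + ε ^ 2` reduces the general case to this one, outside an event of probability
of order `ε` by Markov's inequality.

For the other normalizations, an exponential supermartingale built from the squared increments
truncated at `ε ^ 2` shows `|[S] - ⟨S⟩| ≤ ε / 2` outside an event of probability of order `ε`. The
interpolated normalization is then within a multiple of `ε` of `1`, and `Φ` moves by at most
`|log r|` when its argument is scaled by `r`.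
-/

namespace MartingaleBerryEsseen

universe u

local notation "Φ" => stdNormalCDF
local notation "φ" => ProbabilityTheory.gaussianPDFReal 0 1

/-! ### Taylor estimates -/

section Taylor

variable {f f₁ f₂ f₃ : ℝ → ℝ} {a x M : ℝ}

lemma abs_sub_le_of_abs_deriv_le (hf : ∀ t ∈ Set.uIcc a x, HasDerivAt f (f₁ t) t)
    (hM : ∀ t ∈ Set.uIcc a x, |f₁ t| ≤ M) : |f x - f a| ≤ M * |x - a| :=
  (convex_uIcc a x).norm_image_sub_le_of_norm_hasDerivWithin_le
    (fun t ht => (hf t ht).hasDerivWithinAt) hM Set.left_mem_uIcc Set.right_mem_uIcc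

lemma abs_taylor_one_le (hf : ∀ t ∈ Set.uIcc a x, HasDerivAt f (f₁ t) t)
    (hf₁ : ∀ t ∈ Set.uIcc a x, HasDerivAt f₁ (f₂ t) t)
    (hM : ∀ t ∈ Set.uIcc a x, |f₂ t| ≤ M) :
    |f x - f a - f₁ a * (x - a)| ≤ M * |x - a| ^ 2 := by
  have hM0 : 0 ≤ M := (abs_nonneg _).trans (hM a Set.left_mem_uIcc)
  have hslope : ∀ t ∈ Set.uIcc a x, |f₁ t - f₁ a| ≤ M * |x - a| := fun t ht => by
    have hsub := Set.uIcc_subset_uIcc_left ht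
    calc |f₁ t - f₁ a| ≤ M * |t - a| :=
          abs_sub_le_of_abs_deriv_le (fun s hs => hf₁ s (hsub hs)) fun s hs => hM s (hsub hs)
      _ ≤ M * |x - a| := by gcongr ?_ * ?_; exact Set.abs_sub_left_of_mem_uIcc ht
  have hrem := abs_sub_le_of_abs_deriv_le
    (fun t ht => (hf t ht).sub ((hasDerivAt_id t).const_mul (f₁ a)))
    (fun t ht => by simpa using hslope t ht)
  calc |f x - f a - f₁ a * (x - a)| = |f x - f₁ a * x - (f a - f₁ a * a)| := by ring_nf
    _ ≤ M * |x - a| * |x - a| := hrem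
    _ = M * |x - a| ^ 2 := by ring

lemma abs_taylor_two_le (hf : ∀ t ∈ Set.uIcc a x, HasDerivAt f (f₁ t) t)
    (hf₁ : ∀ t ∈ Set.uIcc a x, HasDerivAt f₁ (f₂ t) t)
    (hf₂ : ∀ t ∈ Set.uIcc a x, HasDerivAt f₂ (f₃ t) t)
    (hM : ∀ t ∈ Set.uIcc a x, |f₃ t| ≤ M) :
    |f x - f a - f₁ a * (x - a) - f₂ a / 2 * (x - a) ^ 2| ≤ M * |x - a| ^ 3 := by
  have hM0 : 0 ≤ M := (abs_nonneg _).trans (hM a Set.left_mem_uIcc)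
  have hslope : ∀ t ∈ Set.uIcc a x,
      |f₁ t - f₁ a - f₂ a * (t - a)| ≤ M * |x - a| ^ 2 := fun t ht => by
    have hsub := Set.uIcc_subset_uIcc_left ht
    calc |f₁ t - f₁ a - f₂ a * (t - a)| ≤ M * |t - a| ^ 2 :=
          abs_taylor_one_le (fun s hs => hf₁ s (hsub hs)) (fun s hs => hf₂ s (hsub hs))
            fun s hs => hM s (hsub hs)
      _ ≤ M * |x - a| ^ 2 := by gcongr ?_ * ?_ ^ 2; exact Set.abs_sub_left_of_mem_uIcc ht
  have hpoly : ∀ t, HasDerivAt (fun t => f₁ a * (t - a) + f₂ a / 2 * (t - a) ^ 2)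
      (f₁ a + f₂ a * (t - a)) t := fun t => by
    have hlin := (hasDerivAt_id t).sub_const a
    exact ((hlin.const_mul (f₁ a)).add ((hlin.pow 2).const_mul (f₂ a / 2))).congr_deriv
      (by simp only [id_eq]; norm_num; ring)
  have hrem := abs_sub_le_of_abs_deriv_le (fun t ht => (hf t ht).sub (hpoly t))
    (fun t ht => by simpa only [sub_sub] using hslope t ht)
  calc |f x - f a - f₁ a * (x - a) - f₂ a / 2 * (x - a) ^ 2|
      = |f x - (f₁ a * (x - a) + f₂ a / 2 * (x - a) ^ 2)
          - (f a - (f₁ a * (a - a) + f₂ a / 2 * (a - a) ^ 2))| := by ring_nf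
    _ ≤ M * |x - a| ^ 2 * |x - a| := hrem
    _ = M * |x - a| ^ 3 := by ring

end Taylor

/-! ### The normal distribution -/

section Gaussian

lemma gaussianPDF_eq (y : ℝ) : φ y = (√(2 * Real.pi))⁻¹ * Real.exp (-y ^ 2 / 2) := by
  simp [ProbabilityTheory.gaussianPDFReal]

lemma stdNormalCDF_eq_integral (x : ℝ) : Φ x = ∫ u in Set.Iic x, φ u := by
  simp only [stdNormalCDF, gaussianPDF_eq]

lemma gaussianPDF_nonneg (y : ℝ) : 0 ≤ φ y := ProbabilityTheory.gaussianPDFReal_nonneg 0 1 y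

lemma integrable_gaussianPDF : Integrable φ := ProbabilityTheory.integrable_gaussianPDFReal 0 1

lemma stdNormalCDF_eq_cdf : Φ = ProbabilityTheory.cdf (ProbabilityTheory.gaussianReal 0 1) := by
  funext x
  rw [ProbabilityTheory.cdf_eq_real, measureReal_def,
    ProbabilityTheory.gaussianReal_apply_eq_integral 0 one_ne_zero, stdNormalCDF_eq_integral,
    ENNReal.toReal_ofReal (integral_nonneg gaussianPDF_nonneg)]

lemma stdNormalCDF_nonneg (x : ℝ) : 0 ≤ Φ x := by
  rw [stdNormalCDF_eq_cdf]; exact ProbabilityTheory.cdf_nonneg _ x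

lemma stdNormalCDF_le_one (x : ℝ) : Φ x ≤ 1 := by
  rw [stdNormalCDF_eq_cdf]; exact ProbabilityTheory.cdf_le_one _ x

lemma measurable_stdNormalCDF : Measurable Φ := by
  rw [stdNormalCDF_eq_cdf]; exact (ProbabilityTheory.monotone_cdf _).measurable

lemma hasDerivAt_stdNormalCDF (x : ℝ) : HasDerivAt Φ (φ x) x := by
  have hcont : Continuous φ := by simp only [funext gaussianPDF_eq]; fun_prop
  have hΦ : Φ = fun y => Φ 0 + ∫ u in (0 : ℝ)..y, φ u := by
    funext y
    rw [← intervalIntegral.integral_Iic_sub_Iic integrable_gaussianPDF.integrableOn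
      integrable_gaussianPDF.integrableOn, ← stdNormalCDF_eq_integral, ← stdNormalCDF_eq_integral]
    ring
  rw [hΦ]
  exact (intervalIntegral.integral_hasDerivAt_right (hcont.intervalIntegrable _ _)
    hcont.stronglyMeasurable.stronglyMeasurableAtFilter hcont.continuousAt).const_add _

lemma stdNormalCDF_neg (x : ℝ) : Φ (-x) = 1 - Φ x := by
  have hrefl : ∫ u in Set.Iic (-x), φ u = ∫ u in Set.Ioi x, φ u := by
    rw [← integral_comp_neg_Ioi]
    simp only [gaussianPDF_eq, neg_sq]
  have htotal := integral_add_compl (measurableSet_Iic (a := x)) integrable_gaussianPDF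
  rw [ProbabilityTheory.integral_gaussianPDFReal_eq_one 0 one_ne_zero, Set.compl_Iic] at htotal
  rw [stdNormalCDF_eq_integral, stdNormalCDF_eq_integral, hrefl]
  linarith

lemma hasDerivAt_gaussianPDF (y : ℝ) : HasDerivAt φ (-y * φ y) y := by
  have hexp : HasDerivAt (fun u : ℝ => -u ^ 2 / 2) (-y) y :=
    ((hasDerivAt_pow 2 y).neg.div_const 2).congr_deriv (by norm_num; ring)
  rw [funext gaussianPDF_eq]
  exact (hexp.exp.const_mul _).congr_deriv (by ring)

lemma hasDerivAt_neg_mul_gaussianPDF (y : ℝ) :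
    HasDerivAt (fun u => -u * φ u) ((y ^ 2 - 1) * φ y) y :=
  ((hasDerivAt_id y).neg.mul (hasDerivAt_gaussianPDF y)).congr_deriv
    (by simp only [Pi.neg_apply, id_eq]; ring)

lemma gaussianPDF_le_exp (y : ℝ) : φ y ≤ Real.exp (-y ^ 2 / 2) := by
  have hsqrt : 1 ≤ √(2 * Real.pi) := Real.one_le_sqrt.2 (by linarith [Real.pi_gt_three])
  rw [gaussianPDF_eq]
  exact mul_le_of_le_one_left (Real.exp_pos _).le (inv_le_one_of_one_le₀ hsqrt)

lemma gaussianPDF_le_one (y : ℝ) : φ y ≤ 1 :=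
  (gaussianPDF_le_exp y).trans (Real.exp_le_one_iff.2 (by linarith [sq_nonneg y]))

lemma abs_mul_gaussianPDF_le_one (y : ℝ) : |y * φ y| ≤ 1 := by
  have hy : |y| ≤ Real.exp (y ^ 2 / 2) := by
    have hamgm : |y| ≤ y ^ 2 / 2 + 1 := by nlinarith [sq_nonneg (|y| - 1), sq_abs y]
    exact hamgm.trans (Real.add_one_le_exp _)
  rw [abs_mul, abs_of_nonneg (gaussianPDF_nonneg y)]
  calc |y| * φ y ≤ Real.exp (y ^ 2 / 2) * Real.exp (-y ^ 2 / 2) :=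
        mul_le_mul hy (gaussianPDF_le_exp y) (gaussianPDF_nonneg y) (Real.exp_pos _).le
    _ = 1 := by rw [← Real.exp_add, neg_div, add_neg_cancel, Real.exp_zero]

lemma abs_stdNormalCDF_sub_le (x y : ℝ) : |Φ x - Φ y| ≤ |x - y| := by
  simpa using abs_sub_le_of_abs_deriv_le (a := y) (x := x) (M := 1)
    (fun t _ => hasDerivAt_stdNormalCDF t)
    (fun t _ => by rw [abs_of_nonneg (gaussianPDF_nonneg t)]; exact gaussianPDF_le_one t)

lemma abs_stdNormalCDF_mul_sub_le_abs_log {r : ℝ} (hr : 0 < r) (y : ℝ) :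
    |Φ (y * r) - Φ y| ≤ |Real.log r| := by
  have hderiv : ∀ u, HasDerivAt (fun u => Φ (y * Real.exp u))
      (y * Real.exp u * φ (y * Real.exp u)) u := fun u =>
    ((hasDerivAt_stdNormalCDF _).comp u ((Real.hasDerivAt_exp u).const_mul y)).congr_deriv
      (mul_comm _ _)
  simpa [Real.exp_log hr] using abs_sub_le_of_abs_deriv_le (a := 0) (x := Real.log r) (M := 1)
    (fun u _ => hderiv u) (fun u _ => abs_mul_gaussianPDF_le_one _)

lemma abs_stdNormalCDF_div_sqrt_one_add_sub_le {a : ℝ} (ha : 0 ≤ a) (y : ℝ) :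
    |Φ (y / √(1 + a)) - Φ y| ≤ a := by
  have hlog : 0 ≤ Real.log (1 + a) := Real.log_nonneg (by linarith)
  calc |Φ (y / √(1 + a)) - Φ y| ≤ |Real.log (√(1 + a))⁻¹| :=
        abs_stdNormalCDF_mul_sub_le_abs_log (inv_pos.2 (Real.sqrt_pos.2 (by linarith))) y
    _ = Real.log (1 + a) / 2 := by
        rw [Real.log_inv, abs_neg, Real.log_sqrt (by linarith), abs_of_nonneg (by linarith)]
    _ ≤ a := by linarith [Real.log_le_sub_one_of_pos (by linarith : 0 < 1 + a)]

end Gaussian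

/-! ### The window -/

section Window

/-- The algebraically decaying weight `(1 + y²)^(-m)`. It is integrable for `1 / 2 < m`, and it
dominates its own derivatives as well as those of the normal density. -/
noncomputable def window (m y : ℝ) : ℝ := (1 + y ^ 2) ^ (-m)

/-- The first derivative of `window m`, in closed form. -/
noncomputable def windowD1 (m y : ℝ) : ℝ := -2 * m * y * window (m + 1) y

/-- The second derivative of `window m`, in closed form. -/
noncomputable def windowD2 (m y : ℝ) : ℝ :=
  -2 * m * window (m + 1) y + 4 * m * (m + 1) * y ^ 2 * window (m + 2) y

/-- The third derivative of `window m`, in closed form. -/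
noncomputable def windowD3 (m y : ℝ) : ℝ :=
  12 * m * (m + 1) * y * window (m + 2) y
    - 8 * m * (m + 1) * (m + 2) * y ^ 3 * window (m + 3) y

lemma window_pos (m y : ℝ) : 0 < window m y := by unfold window; positivity

lemma measurable_window (m : ℝ) : Measurable (window m) := by unfold window; fun_prop

lemma window_antitone_left {m m' : ℝ} (h : m ≤ m') (y : ℝ) : window m' y ≤ window m y :=
  Real.rpow_le_rpow_of_exponent_le (by linarith [sq_nonneg y]) (neg_le_neg h)

lemma window_le_one {m : ℝ} (hm : 0 ≤ m) (y : ℝ) : window m y ≤ 1 := by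
  simpa [window] using window_antitone_left hm y

lemma inv_le_window {m : ℝ} (hm : m ≤ 1) (y : ℝ) : (1 + y ^ 2)⁻¹ ≤ window m y := by
  simpa [window, Real.rpow_neg_one] using window_antitone_left hm y

lemma window_add_nat_mul_pow (m y : ℝ) (j : ℕ) :
    window (m + j) y * (1 + y ^ 2) ^ j = window m y := by
  have hy : 0 < 1 + y ^ 2 := by positivity
  rw [window, window, ← Real.rpow_add_natCast hy.ne', neg_add, neg_add_cancel_right]

lemma abs_pow_mul_window_le (m y : ℝ) {j k : ℕ} (hjk : k ≤ 2 * j) :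
    |y| ^ k * window (m + j) y ≤ window m y := by
  have hy : |y| ^ k ≤ (1 + y ^ 2) ^ j := by
    have hsqrt : |y| ≤ √(1 + y ^ 2) := Real.abs_le_sqrt (by linarith)
    calc |y| ^ k ≤ √(1 + y ^ 2) ^ k := by gcongr
      _ ≤ √(1 + y ^ 2) ^ (2 * j) :=
        pow_le_pow_right₀ (Real.one_le_sqrt.2 (by linarith [sq_nonneg y])) hjk
      _ = (1 + y ^ 2) ^ j := by rw [pow_mul, Real.sq_sqrt (by positivity)]
  rw [← window_add_nat_mul_pow m y j, mul_comm]
  exact mul_le_mul_of_nonneg_left hy (window_pos _ _).le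

lemma hasDerivAt_window (m y : ℝ) : HasDerivAt (window m) (windowD1 m y) y := by
  have hbase : HasDerivAt (fun y : ℝ => 1 + y ^ 2) (2 * y) y := by
    simpa using (hasDerivAt_pow 2 y).const_add 1
  refine (hbase.rpow_const (p := -m) (Or.inl (by positivity))).congr_deriv ?_
  rw [windowD1, window, show -m - 1 = -(m + 1) by ring]
  ring

lemma hasDerivAt_windowD1 (m y : ℝ) : HasDerivAt (windowD1 m) (windowD2 m y) y := by
  refine (((hasDerivAt_id y).const_mul (-2 * m)).mul
    (hasDerivAt_window (m + 1) y)).congr_deriv ?_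
  rw [windowD1, windowD2, add_assoc, one_add_one_eq_two, id_eq]
  ring

lemma hasDerivAt_windowD2 (m y : ℝ) : HasDerivAt (windowD2 m) (windowD3 m y) y := by
  refine (((hasDerivAt_window (m + 1) y).const_mul (-2 * m)).add
    (((hasDerivAt_pow 2 y).const_mul (4 * m * (m + 1))).mul
      (hasDerivAt_window (m + 2) y))).congr_deriv ?_
  rw [windowD1, windowD1, windowD3, show m + 1 + 1 = m + 2 by ring,
    show m + 2 + 1 = m + 3 by ring]
  norm_num
  ring

variable {m : ℝ}

lemma abs_windowD1_le (hm0 : 0 ≤ m) (hm1 : m ≤ 1) (y : ℝ) : |windowD1 m y| ≤ 2 * window m y := by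
  have hpow : |y| ^ 1 * window (m + 1) y ≤ window m y := by
    exact_mod_cast abs_pow_mul_window_le m y (j := 1) (k := 1) (by norm_num)
  have hW := window_pos (m + 1) y
  calc |windowD1 m y| = 2 * m * (|y| ^ 1 * window (m + 1) y) := by
        simp only [windowD1, abs_mul, abs_neg, abs_two, abs_of_nonneg hm0,
          abs_of_pos (window_pos _ y)]
        ring
    _ ≤ 2 * 1 * window m y := by gcongr
    _ = 2 * window m y := by ring

lemma abs_windowD2_le (hm0 : 0 ≤ m) (hm1 : m ≤ 1) (y : ℝ) :
    |windowD2 m y| ≤ 10 * window m y := by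
  have hpow0 : window (m + 1) y ≤ window m y := window_antitone_left (by linarith) y
  have hpow2 : |y| ^ 2 * window (m + 2) y ≤ window m y := by
    exact_mod_cast abs_pow_mul_window_le m y (j := 2) (k := 2) (by norm_num)
  have hW1 := window_pos (m + 1) y
  have hW2 := window_pos (m + 2) y
  calc |windowD2 m y| ≤ 2 * m * window (m + 1) y
          + 4 * m * (m + 1) * (|y| ^ 2 * window (m + 2) y) := by
        refine (abs_add_le _ _).trans_eq ?_
        simp only [abs_mul, abs_neg, abs_pow, abs_of_nonneg hm0,
          abs_of_pos (window_pos _ y), abs_of_nonneg (by linarith : 0 ≤ m + 1), Nat.abs_ofNat]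
        ring
    _ ≤ 2 * 1 * window m y + 4 * 1 * (1 + 1) * window m y := by gcongr
    _ = 10 * window m y := by ring

lemma abs_windowD3_le (hm0 : 0 ≤ m) (hm1 : m ≤ 1) (y : ℝ) :
    |windowD3 m y| ≤ 72 * window m y := by
  have hpow1 : |y| ^ 1 * window (m + 2) y ≤ window m y := by
    exact_mod_cast abs_pow_mul_window_le m y (j := 2) (k := 1) (by norm_num)
  have hpow3 : |y| ^ 3 * window (m + 3) y ≤ window m y := by
    exact_mod_cast abs_pow_mul_window_le m y (j := 3) (k := 3) (by norm_num)
  have hW2 := window_pos (m + 2) y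
  have hW3 := window_pos (m + 3) y
  calc |windowD3 m y| ≤ 12 * m * (m + 1) * (|y| ^ 1 * window (m + 2) y)
          + 8 * m * (m + 1) * (m + 2) * (|y| ^ 3 * window (m + 3) y) := by
        refine (abs_sub _ _).trans_eq ?_
        simp only [abs_mul, abs_pow, abs_of_nonneg hm0,
          abs_of_pos (window_pos _ y), abs_of_nonneg (by linarith : 0 ≤ m + 1),
          abs_of_nonneg (by linarith : 0 ≤ m + 2), Nat.abs_ofNat]
        ring
    _ ≤ 12 * 1 * (1 + 1) * window m y + 8 * 1 * (1 + 1) * (1 + 2) * window m y := by gcongr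
    _ = 72 * window m y := by ring

lemma neg_window_le_windowD2 (hm : 0 ≤ m) (y : ℝ) :
    -2 * m * window (m + 1) y ≤ windowD2 m y := by
  have hW := window_pos (m + 2) y
  exact le_add_of_nonneg_right (by positivity)

lemma window_add_le (hm0 : 0 ≤ m) (hm1 : m ≤ 1) (y : ℝ) {h : ℝ} (hh : |h| ≤ 1) :
    window m (y + h) ≤ 3 * window m y := by
  have hh2 : h ^ 2 ≤ 1 := (sq_le_one_iff_abs_le_one h).2 hh
  have hbase : (1 + y ^ 2) / 3 ≤ 1 + (y + h) ^ 2 := by nlinarith [sq_nonneg (y + 2 * h)]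
  calc window m (y + h) ≤ ((1 + y ^ 2) / 3) ^ (-m) :=
        Real.rpow_le_rpow_of_nonpos (by positivity) hbase (neg_nonpos.2 hm0)
    _ = 3 ^ m * window m y := by
        rw [Real.div_rpow (by positivity) (by norm_num), Real.rpow_neg (by norm_num : (0 : ℝ) ≤ 3),
          div_inv_eq_mul, mul_comm, window]
    _ ≤ 3 * window m y := by
        gcongr
        · exact (window_pos m y).le
        · simpa using Real.rpow_le_rpow_of_exponent_le (by norm_num : (1 : ℝ) ≤ 3) hm1

lemma one_add_sq_pow_mul_exp_le (hm : m ≤ 1) (y : ℝ) :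
    (1 + y ^ 2) ^ 2 * Real.exp (-y ^ 2 / 4) ≤ 1200 * window m y := by
  have hcube : (1 + y ^ 2) ^ 3 * Real.exp (-y ^ 2 / 4) ≤ 1200 := by
    have hseries := Real.pow_div_factorial_le_exp ((1 + y ^ 2) / 4) (by positivity) 3
    have hquarter : Real.exp (1 / 4) ≤ 3 :=
      (Real.exp_le_exp.2 (by norm_num)).trans Real.exp_one_lt_three.le
    calc (1 + y ^ 2) ^ 3 * Real.exp (-y ^ 2 / 4)
        ≤ 384 * Real.exp ((1 + y ^ 2) / 4) * Real.exp (-y ^ 2 / 4) := by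
          gcongr
          norm_num [Nat.factorial] at hseries
          linarith
      _ = 384 * Real.exp (1 / 4) := by rw [mul_assoc, ← Real.exp_add]; ring_nf
      _ ≤ 1200 := by linarith
  calc (1 + y ^ 2) ^ 2 * Real.exp (-y ^ 2 / 4)
      = (1 + y ^ 2) ^ 3 * Real.exp (-y ^ 2 / 4) * (1 + y ^ 2)⁻¹ := by field_simp
    _ ≤ 1200 * window m y := by gcongr; exact inv_le_window hm y

lemma abs_mul_gaussianPDF_le_window (hm : m ≤ 1) {P y : ℝ} (hP : |P| ≤ (1 + y ^ 2) ^ 2) :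
    |P * φ y| ≤ 1200 * window m y := by
  refine le_trans ?_ (one_add_sq_pow_mul_exp_le hm y)
  rw [abs_mul, abs_of_nonneg (gaussianPDF_nonneg y)]
  gcongr
  · exact gaussianPDF_nonneg y
  · exact (gaussianPDF_le_exp y).trans (Real.exp_le_exp.2 (by linarith [sq_nonneg y]))

end Window

/-! ### The Lyapunov function -/

section Profile

/-- The spatial profile `Φ - c · window m` of the Lyapunov function. -/
noncomputable def profile (c m y : ℝ) : ℝ := Φ y - c * window m y

/-- The first derivative of `profile c m`, in closed form. -/
noncomputable def profileD1 (c m y : ℝ) : ℝ := φ y - c * windowD1 m y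

/-- The second derivative of `profile c m`, in closed form. -/
noncomputable def profileD2 (c m y : ℝ) : ℝ := -y * φ y - c * windowD2 m y

/-- The third derivative of `profile c m`, in closed form. -/
noncomputable def profileD3 (c m y : ℝ) : ℝ := (y ^ 2 - 1) * φ y - c * windowD3 m y

lemma hasDerivAt_profile (c m y : ℝ) : HasDerivAt (profile c m) (profileD1 c m y) y :=
  (hasDerivAt_stdNormalCDF y).sub ((hasDerivAt_window m y).const_mul c)

lemma hasDerivAt_profileD1 (c m y : ℝ) : HasDerivAt (profileD1 c m) (profileD2 c m y) y :=
  (hasDerivAt_gaussianPDF y).sub ((hasDerivAt_windowD1 m y).const_mul c)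

lemma hasDerivAt_profileD2 (c m y : ℝ) : HasDerivAt (profileD2 c m) (profileD3 c m y) y :=
  (hasDerivAt_neg_mul_gaussianPDF y).sub ((hasDerivAt_windowD2 m y).const_mul c)

variable {c m : ℝ}

lemma abs_sub_mul_le {c u w A B : ℝ} (hc0 : 0 ≤ c) (hc1 : c ≤ 1) (hu : |u| ≤ A) (hw : |w| ≤ B) :
    |u - c * w| ≤ A + B := by
  calc |u - c * w| ≤ |u| + c * |w| := by
        simpa only [abs_mul, abs_of_nonneg hc0] using abs_sub u (c * w)
    _ ≤ A + 1 * B := by gcongr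
    _ = A + B := by rw [one_mul]

lemma abs_profileD1_le (hc0 : 0 ≤ c) (hc1 : c ≤ 1) (hm0 : 0 ≤ m) (hm1 : m ≤ 1) (y : ℝ) :
    |profileD1 c m y| ≤ 3 := by
  have hφ : |φ y| ≤ 1 := by
    rw [abs_of_nonneg (gaussianPDF_nonneg y)]; exact gaussianPDF_le_one y
  have hW : |windowD1 m y| ≤ 2 := by
    linarith [abs_windowD1_le hm0 hm1 y, window_le_one hm0 y]
  exact (abs_sub_mul_le hc0 hc1 hφ hW).trans (by norm_num)

lemma abs_profileD2_le (hc0 : 0 ≤ c) (hc1 : c ≤ 1) (hm0 : 0 ≤ m) (hm1 : m ≤ 1) (y : ℝ) :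
    |profileD2 c m y| ≤ 1300 * window m y := by
  have hφ : |-y * φ y| ≤ 1200 * window m y := abs_mul_gaussianPDF_le_window hm1 (by
    rw [abs_neg, abs_le]; constructor <;> nlinarith [sq_nonneg (y + 1), sq_nonneg (y - 1)])
  have hsum := abs_sub_mul_le hc0 hc1 hφ (abs_windowD2_le hm0 hm1 y)
  exact hsum.trans (by linarith [window_pos m y])

lemma abs_profileD3_le (hc0 : 0 ≤ c) (hc1 : c ≤ 1) (hm0 : 0 ≤ m) (hm1 : m ≤ 1) (y : ℝ) :
    |profileD3 c m y| ≤ 1300 * window m y := by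
  have hφ : |(y ^ 2 - 1) * φ y| ≤ 1200 * window m y := abs_mul_gaussianPDF_le_window hm1 (by
    rw [abs_le]; constructor <;> nlinarith [sq_nonneg y, sq_nonneg (y ^ 2)])
  have hsum := abs_sub_mul_le hc0 hc1 hφ (abs_windowD3_le hm0 hm1 y)
  exact hsum.trans (by linarith [window_pos m y])

lemma profile_add_le_cubic (hc0 : 0 ≤ c) (hc1 : c ≤ 1) (hm0 : 0 ≤ m) (hm1 : m ≤ 1) (y : ℝ)
    {h : ℝ} (hh : |h| ≤ 1) :
    profile c m (y + h) ≤ profile c m y + profileD1 c m y * h + profileD2 c m y / 2 * h ^ 2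
      + 3900 * window m y * |h| ^ 3 := by
  have hD3 : ∀ t ∈ Set.uIcc y (y + h), |profileD3 c m t| ≤ 3900 * window m y := fun t ht => by
    have hdist : |t - y| ≤ 1 := (Set.abs_sub_left_of_mem_uIcc ht).trans (by simpa using hh)
    have hharnack := window_add_le hm0 hm1 y hdist
    rw [add_sub_cancel] at hharnack
    linarith [abs_profileD3_le hc0 hc1 hm0 hm1 t]
  have htaylor := abs_taylor_two_le (fun t _ => hasDerivAt_profile c m t)
    (fun t _ => hasDerivAt_profileD1 c m t) (fun t _ => hasDerivAt_profileD2 c m t) hD3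
  rw [add_sub_cancel_left] at htaylor
  linarith [(abs_le.1 htaylor).2]

lemma profile_add_le_quadratic (hc0 : 0 ≤ c) (hc1 : c ≤ 1) (hm0 : 0 ≤ m) (hm1 : m ≤ 1)
    (y h : ℝ) :
    profile c m (y + h) ≤ profile c m y + profileD1 c m y * h + profileD2 c m y / 2 * h ^ 2
      + 2000 * h ^ 2 := by
  have hD2 : ∀ t, |profileD2 c m t| ≤ 1300 := fun t => by
    linarith [abs_profileD2_le hc0 hc1 hm0 hm1 t, window_le_one hm0 t]
  have htaylor := abs_taylor_one_le (a := y) (x := y + h) (fun t _ => hasDerivAt_profile c m t)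
    (fun t _ => hasDerivAt_profileD1 c m t) (fun t _ => hD2 t)
  rw [add_sub_cancel_left, sq_abs] at htaylor
  nlinarith [(abs_le.1 htaylor).2, (abs_le.1 (hD2 y)).1, sq_nonneg h]

end Profile

section TimeEstimates

lemma hasDerivAt_div_sqrt_one_add (y : ℝ) {τ : ℝ} (hτ : 0 < 1 + τ) :
    HasDerivAt (fun τ => y / √(1 + τ)) (-(y / √(1 + τ)) / (2 * (1 + τ))) τ := by
  have hsqrt : 0 < √(1 + τ) := Real.sqrt_pos.2 hτ
  refine ((((hasDerivAt_id τ).const_add 1).sqrt hτ.ne').inv hsqrt.ne' |>.const_mul y).congr_deriv ?_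
  simp only [id_eq]
  rw [Real.sq_sqrt hτ.le]
  field_simp

lemma abs_mul_gaussianPDF_le_of_sq_le {m : ℝ} (hm : m ≤ 1) {y z : ℝ} (hzy : z ^ 2 ≤ y ^ 2)
    (hyz : y ^ 2 / 2 ≤ z ^ 2) : |z * (3 - z ^ 2) / 4 * φ z| ≤ 1200 * window m y := by
  have hz : |z| ≤ 1 + z ^ 2 := by nlinarith [sq_nonneg (|z| - 1), sq_abs z]
  have hpoly : |z * (3 - z ^ 2) / 4| ≤ (1 + y ^ 2) ^ 2 :=
    calc |z * (3 - z ^ 2) / 4| = |z| * |3 - z ^ 2| / 4 := by rw [abs_div, abs_mul, Nat.abs_ofNat]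
      _ ≤ (1 + z ^ 2) * (4 * (1 + z ^ 2)) / 4 := by
        gcongr
        rw [abs_le]
        constructor <;> linarith [sq_nonneg z]
      _ = (1 + z ^ 2) ^ 2 := by ring
      _ ≤ (1 + y ^ 2) ^ 2 := by gcongr
  have hexp : φ z ≤ Real.exp (-y ^ 2 / 4) :=
    (gaussianPDF_le_exp z).trans (Real.exp_le_exp.2 (by linarith))
  rw [abs_mul, abs_of_nonneg (gaussianPDF_nonneg z)]
  exact (mul_le_mul hpoly hexp (gaussianPDF_nonneg z) (by positivity)).trans
    (one_add_sq_pow_mul_exp_le hm y)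

lemma abs_stdNormalCDF_div_sqrt_sub_le {m : ℝ} (hm : m ≤ 1) (y : ℝ) {τ : ℝ} (hτ0 : 0 ≤ τ)
    (hτ1 : τ ≤ 1) :
    |Φ (y / √(1 + τ)) - Φ y - -y * φ y / 2 * τ| ≤ 1200 * window m y * τ ^ 2 := by
  let z : ℝ → ℝ := fun t => y / √(1 + t)
  have hmem : ∀ t ∈ Set.uIcc 0 τ, 0 ≤ t ∧ t ≤ 1 := fun t ht => by
    rw [Set.uIcc_of_le hτ0] at ht
    exact ⟨ht.1, ht.2.trans hτ1⟩
  have hz : ∀ t ∈ Set.uIcc 0 τ, HasDerivAt z (-z t / (2 * (1 + t))) t := fun t ht =>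
    hasDerivAt_div_sqrt_one_add y (by linarith [hmem t ht])
  have hderiv1 : ∀ t ∈ Set.uIcc 0 τ,
      HasDerivAt (fun t => Φ (z t)) (-z t * φ (z t) / (2 * (1 + t))) t := fun t ht =>
    ((hasDerivAt_stdNormalCDF _).comp t (hz t ht)).congr_deriv (by ring)
  have hderiv2 : ∀ t ∈ Set.uIcc 0 τ, HasDerivAt (fun t => -z t * φ (z t) / (2 * (1 + t)))
      (z t * (3 - z t ^ 2) / 4 * φ (z t) / (1 + t) ^ 2) t := fun t ht => by
    have ht0 : 1 + t ≠ 0 := by linarith [hmem t ht]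
    refine (((hasDerivAt_neg_mul_gaussianPDF _).comp t (hz t ht)).div
      (((hasDerivAt_id t).const_add 1).const_mul 2) (by simpa using ht0)).congr_deriv ?_
    simp only [Function.comp_apply, id_eq]
    field_simp
    ring
  have hbound : ∀ t ∈ Set.uIcc 0 τ,
      |z t * (3 - z t ^ 2) / 4 * φ (z t) / (1 + t) ^ 2| ≤ 1200 * window m y := fun t ht => by
    obtain ⟨ht0, ht1⟩ := hmem t ht
    have hzsq : z t ^ 2 = y ^ 2 / (1 + t) := by rw [div_pow, Real.sq_sqrt (by linarith)]
    have hzy : z t ^ 2 ≤ y ^ 2 := hzsq ▸ div_le_self (sq_nonneg y) (by linarith)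
    have hyz : y ^ 2 / 2 ≤ z t ^ 2 :=
      hzsq ▸ div_le_div_of_nonneg_left (sq_nonneg y) (by linarith) (by linarith)
    rw [abs_div, abs_of_pos (by positivity : 0 < (1 + t) ^ 2)]
    exact (div_le_self (abs_nonneg _) (one_le_pow₀ (by linarith))).trans
      (abs_mul_gaussianPDF_le_of_sq_le hm hzy hyz)
  simpa [z] using abs_taylor_one_le hderiv1 hderiv2 hbound

lemma rpow_neg_one_add_le {α q : ℝ} (hα0 : 0 ≤ α) (hα1 : α ≤ 1) (hq : 0 ≤ q) :
    (1 + q) ^ (-α) ≤ 1 - α * q + α * q ^ 2 := by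
  have hq1 : 0 < 1 + q := by linarith
  have hbernoulli : (1 + q) ^ (1 - α) ≤ 1 + (1 - α) * q :=
    rpow_one_add_le_one_add_mul_self (by linarith) (by linarith) (by linarith)
  have hα3 : 0 ≤ α * q ^ 3 := by positivity
  calc (1 + q) ^ (-α) = (1 + q) ^ (1 - α) / (1 + q) := by
        rw [← Real.rpow_sub_one hq1.ne']; congr 1; ring
    _ ≤ 1 - α * q + α * q ^ 2 := by rw [div_le_iff₀ hq1]; nlinarith

lemma rpow_neg_one_add_mul_rpow_neg_one_add_le {α β q τ : ℝ} (hα0 : 0 ≤ α) (hα1 : α ≤ 1)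
    (hβ0 : 0 ≤ β) (hβ1 : β ≤ 1) (hq : 0 ≤ q) (hqτ : q ≤ τ) (hτ1 : τ ≤ 1) :
    (1 + τ) ^ (-α) * (1 + q) ^ (-β) ≤ 1 - α * τ - β * q + 4 * τ ^ 2 := by
  have hτ0 : 0 ≤ τ := hq.trans hqτ
  have hατ : α * τ ≤ τ := mul_le_of_le_one_left hτ0 hα1
  have hβq : β * q ≤ τ := (mul_le_of_le_one_left hq hβ1).trans hqτ
  have hv0 : 0 ≤ β * q - β * q ^ 2 := by nlinarith [mul_nonneg hβ0 hq]
  calc (1 + τ) ^ (-α) * (1 + q) ^ (-β)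
      ≤ (1 - α * τ + α * τ ^ 2) * (1 - β * q + β * q ^ 2) :=
        mul_le_mul (rpow_neg_one_add_le hα0 hα1 hτ0) (rpow_neg_one_add_le hβ0 hβ1 hq)
          (by positivity) (by nlinarith [sq_nonneg τ])
    _ = 1 - α * τ - β * q + α * τ ^ 2 + β * q ^ 2
          + (α * τ - α * τ ^ 2) * (β * q - β * q ^ 2) := by ring
    _ ≤ 1 - α * τ - β * q + 1 * τ ^ 2 + 1 * τ ^ 2 + τ * τ := by
        have hprod : (α * τ - α * τ ^ 2) * (β * q - β * q ^ 2) ≤ τ * τ :=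
          mul_le_mul (by nlinarith [mul_nonneg hα0 (sq_nonneg τ)])
            (by nlinarith [mul_nonneg hβ0 (sq_nonneg q)]) hv0 hτ0
        gcongr
    _ ≤ 1 - α * τ - β * q + 4 * τ ^ 2 := by nlinarith [sq_nonneg τ]

lemma rpow_mul_window_div_sqrt (b m y : ℝ) {τ : ℝ} (hτ : 0 ≤ τ) :
    (1 + τ) ^ (-b) * window m (y / √(1 + τ))
      = window m y * ((1 + τ) ^ (-(b - m)) * (1 + τ / (1 + y ^ 2)) ^ (-m)) := by
  have hτ1 : 0 < 1 + τ := by linarith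
  have hbase : 1 + (y / √(1 + τ)) ^ 2 = (1 + y ^ 2) * (1 + τ / (1 + y ^ 2)) * (1 + τ)⁻¹ := by
    rw [div_pow, Real.sq_sqrt hτ1.le]
    field_simp
    ring
  rw [window, window, hbase, Real.mul_rpow (by positivity) (by positivity),
    Real.mul_rpow (by positivity) (by positivity), Real.inv_rpow hτ1.le, ← Real.rpow_neg hτ1.le,
    neg_neg, show -(b - m) = -b + m by ring, Real.rpow_add hτ1]
  ring

variable {b m τ : ℝ}

lemma rpow_mul_window_le (hm0 : 0 ≤ m) (hmb : m ≤ b) (y : ℝ) (hτ : 0 ≤ τ) :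
    (1 + τ) ^ (-b) * window m (y / √(1 + τ)) ≤ window m y := by
  rw [rpow_mul_window_div_sqrt b m y hτ]
  have hq : 0 ≤ τ / (1 + y ^ 2) := by positivity
  exact mul_le_of_le_one_right (window_pos m y).le (mul_le_one₀
    (Real.rpow_le_one_of_one_le_of_nonpos (by linarith) (by linarith)) (by positivity)
    (Real.rpow_le_one_of_one_le_of_nonpos (by linarith) (by linarith)))

lemma rpow_mul_window_le_taylor (hm0 : 0 ≤ m) (hmb : m ≤ b) (hb1 : b ≤ 1) (y : ℝ) (hτ0 : 0 ≤ τ)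
    (hτ1 : τ ≤ 1) :
    (1 + τ) ^ (-b) * window m (y / √(1 + τ))
      ≤ window m y * (1 - (b - m) * τ + 4 * τ ^ 2) + windowD2 m y / 2 * τ := by
  have hW := window_pos m y
  have hprod := rpow_neg_one_add_mul_rpow_neg_one_add_le (α := b - m) (by linarith) (by linarith)
    hm0 (hmb.trans hb1) (by positivity : 0 ≤ τ / (1 + y ^ 2))
    (div_le_self hτ0 (by linarith [sq_nonneg y])) hτ1
  have hshift : window m y * (τ / (1 + y ^ 2)) = τ * window (m + 1) y := by
    have hsucc : window (m + 1) y * (1 + y ^ 2) = window m y := by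
      simpa using window_add_nat_mul_pow m y 1
    rw [← hsucc]
    field_simp
  rw [rpow_mul_window_div_sqrt b m y hτ0]
  nlinarith [mul_le_mul_of_nonneg_left hprod hW.le,
    mul_le_mul_of_nonneg_right (neg_window_le_windowD2 hm0 y) hτ0]

end TimeEstimates

section Lyapunov

/-- The constraints relating the moment exponent `p`, the amplitude `κ`, the decay exponent `b` of
the correction in the remaining variance, and the spatial decay exponent `m`. -/
structure LyapunovParams (p κ b m : ℝ) : Prop where
  one_lt_p : 1 < p
  half_lt_m : 1 / 2 < m
  m_lt_b : m < b
  b_le_one : b ≤ 1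
  exponent_le : b * (2 * p - 2) ≤ p
  le_amplitude : 10000 ≤ κ * (b - m)

namespace LyapunovParams

variable {p κ b m : ℝ} (hP : LyapunovParams p κ b m)

include hP

lemma m_nonneg : 0 ≤ m := by linarith [hP.half_lt_m]

lemma m_le_one : m ≤ 1 := hP.m_lt_b.le.trans hP.b_le_one

lemma b_pos : 0 < b := by linarith [hP.half_lt_m, hP.m_lt_b]

lemma κ_pos : 0 < κ :=
  pos_of_mul_pos_left (lt_of_lt_of_le (by norm_num) hP.le_amplitude) (sub_nonneg.2 hP.m_lt_b.le)

lemma correction_nonneg {v : ℝ} (hv : 0 ≤ v) : 0 ≤ κ * v ^ (-b) :=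
  mul_nonneg hP.κ_pos.le (Real.rpow_nonneg hv _)

end LyapunovParams

/-- The Lyapunov function: the normal probability `Φ(s / √v)` at position `s` when the variance `v`
remains, lowered by `κ v^(-b) window(s / √v)`. The strict decay `b - m` of the correction in `v`
pays for the Taylor remainders. -/
noncomputable def lyapunov (κ b m s v : ℝ) : ℝ := profile (κ * v ^ (-b)) m (s / √v)

/-- The derivative of `lyapunov κ b m` in the position. -/
noncomputable def lyapunovGrad (κ b m s v : ℝ) : ℝ := profileD1 (κ * v ^ (-b)) m (s / √v) / √v

/-- The coefficient of a squared increment in the one-step expansion of `lyapunov κ b m`: half the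
second derivative in the position, plus an allowance for the cubic Taylor remainder of increments
below `v ^ (1 / 2 - b)`. -/
noncomputable def lyapunovRate (κ b m s v : ℝ) : ℝ :=
  (profileD2 (κ * v ^ (-b)) m (s / √v) / 2 + 3900 * v ^ (-b) * window m (s / √v)) / v

lemma measurable_lyapunov (κ b m : ℝ) :
    Measurable fun x : ℝ × ℝ => lyapunov κ b m x.1 x.2 := by
  have hquot : Measurable fun x : ℝ × ℝ => x.1 / √x.2 := by fun_prop
  have hΦ := measurable_stdNormalCDF.comp hquot
  have hW := (measurable_window m).comp hquot
  unfold lyapunov profile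
  fun_prop

lemma measurable_lyapunovGrad (κ b m : ℝ) :
    Measurable fun x : ℝ × ℝ => lyapunovGrad κ b m x.1 x.2 := by
  unfold lyapunovGrad profileD1 windowD1 window
  fun_prop

lemma measurable_lyapunovRate (κ b m : ℝ) :
    Measurable fun x : ℝ × ℝ => lyapunovRate κ b m x.1 x.2 := by
  unfold lyapunovRate profileD2 windowD2 window
  fun_prop

lemma le_rpow_of_sq_rpow_neg_le {p b v τ : ℝ} (hp : 1 < p) (hb : b * (2 * p - 2) ≤ p) (hv : 1 ≤ v)
    (hτ : (v ^ (-b)) ^ 2 ≤ τ) : τ ≤ (τ * v) ^ p := by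
  have hv0 : 0 < v := by linarith
  have hτ0 : 0 < τ := lt_of_lt_of_le (by positivity) hτ
  have hτ_rpow : v ^ (-(b * (2 * p - 2))) ≤ τ ^ (p - 1) :=
    calc v ^ (-(b * (2 * p - 2))) = ((v ^ (-b)) ^ 2) ^ (p - 1) := by
          rw [← Real.rpow_mul_natCast hv0.le, ← Real.rpow_mul hv0.le]
          congr 1
          push_cast
          ring
      _ ≤ τ ^ (p - 1) := Real.rpow_le_rpow (by positivity) hτ (by linarith)
  have hone : 1 ≤ τ ^ (p - 1) * v ^ p :=
    calc 1 ≤ v ^ (-(b * (2 * p - 2)) + p) := Real.one_le_rpow hv (by linarith)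
      _ = v ^ (-(b * (2 * p - 2))) * v ^ p := Real.rpow_add hv0 _ _
      _ ≤ τ ^ (p - 1) * v ^ p := by gcongr
  calc τ ≤ τ * (τ ^ (p - 1) * v ^ p) := le_mul_of_one_le_right hτ0.le hone
    _ = (τ * v) ^ p := by
      rw [Real.mul_rpow hτ0.le hv0.le, ← mul_assoc, ← Real.rpow_one_add' hτ0.le (by linarith),
        add_sub_cancel]

variable {p κ b m v : ℝ} (hP : LyapunovParams p κ b m) (hv : 1 ≤ v)

include hP hv

lemma rpow_neg_le_one : v ^ (-b) ≤ 1 :=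
  Real.rpow_le_one_of_one_le_of_nonpos hv (by linarith [hP.b_pos])

variable (hκ : κ * v ^ (-b) ≤ 1) (s : ℝ)

include hκ

lemma abs_lyapunovGrad_le : |lyapunovGrad κ b m s v| ≤ 3 := by
  have hκ0 : 0 ≤ κ * v ^ (-b) := hP.correction_nonneg (by linarith)
  rw [lyapunovGrad, abs_div, abs_of_nonneg (Real.sqrt_nonneg v)]
  exact (div_le_self (abs_nonneg _) (Real.one_le_sqrt.2 hv)).trans
    (abs_profileD1_le hκ0 hκ hP.m_nonneg hP.m_le_one _)

lemma abs_lyapunovRate_mul_le : |lyapunovRate κ b m s v * v| ≤ 4600 := by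
  have hκ0 : 0 ≤ κ * v ^ (-b) := hP.correction_nonneg (by linarith)
  have hW0 := window_pos m (s / √v)
  have hW1 := window_le_one hP.m_nonneg (s / √v)
  have hW : |3900 * v ^ (-b) * window m (s / √v)| ≤ 3900 := by
    rw [abs_of_nonneg (by positivity), mul_assoc]
    have := mul_le_one₀ (rpow_neg_le_one hP hv) hW0.le hW1
    linarith
  have hD2 := abs_profileD2_le hκ0 hκ hP.m_nonneg hP.m_le_one (s / √v)
  rw [lyapunovRate, div_mul_cancel₀ _ (by linarith)]
  refine (abs_add_le _ _).trans ?_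
  rw [abs_div, abs_two]
  linarith

lemma lyapunov_add_left_le (X : ℝ) :
    lyapunov κ b m (s + X) v ≤ lyapunov κ b m s v + lyapunovGrad κ b m s v * X
      + lyapunovRate κ b m s v * X ^ 2 + 2000 * (X ^ 2) ^ p := by
  have hv0 : 0 < v := by linarith
  have hκ0 : 0 ≤ κ * v ^ (-b) := hP.correction_nonneg (by linarith)
  have hW := window_pos m (s / √v)
  have hXh : X ^ 2 = (X / √v) ^ 2 * v := by rw [div_pow, Real.sq_sqrt hv0.le]; field_simp
  have hgrad : lyapunovGrad κ b m s v * X = profileD1 (κ * v ^ (-b)) m (s / √v) * (X / √v) := by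
    rw [lyapunovGrad]; ring
  have hrate : lyapunovRate κ b m s v * X ^ 2
      = profileD2 (κ * v ^ (-b)) m (s / √v) / 2 * (X / √v) ^ 2
        + 3900 * v ^ (-b) * window m (s / √v) * (X / √v) ^ 2 := by
    rw [lyapunovRate, hXh]; field_simp
  rw [hgrad, hrate, lyapunov, lyapunov, add_div]
  set y := s / √v
  set h := X / √v
  by_cases hsmall : |h| ≤ v ^ (-b)
  · have hcubic := profile_add_le_cubic hκ0 hκ hP.m_nonneg hP.m_le_one y
      (hsmall.trans (rpow_neg_le_one hP hv))
    have habsorb : 3900 * window m y * |h| ^ 3 ≤ 3900 * v ^ (-b) * window m y * h ^ 2 :=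
      calc 3900 * window m y * |h| ^ 3 = 3900 * window m y * (|h| * h ^ 2) := by
            rw [← sq_abs h]; ring
        _ ≤ 3900 * window m y * (v ^ (-b) * h ^ 2) := by gcongr
        _ = 3900 * v ^ (-b) * window m y * h ^ 2 := by ring
    have hrest : 0 ≤ 2000 * (X ^ 2) ^ p := by positivity
    linarith
  · have hquad := profile_add_le_quadratic hκ0 hκ hP.m_nonneg hP.m_le_one y h
    have hlarge : h ^ 2 ≤ (X ^ 2) ^ p := by
      rw [hXh]
      refine le_rpow_of_sq_rpow_neg_le hP.one_lt_p hP.exponent_le hv ?_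
      rw [← sq_abs h]
      gcongr
      exact (not_le.1 hsmall).le
    have hrest : 0 ≤ 3900 * v ^ (-b) * window m y * h ^ 2 := by positivity
    linarith

omit hP hκ in
lemma lyapunov_mul_one_add {τ : ℝ} (hτ : 0 ≤ τ) :
    lyapunov κ b m s (v * (1 + τ)) = Φ (s / √v / √(1 + τ))
      - κ * v ^ (-b) * ((1 + τ) ^ (-b) * window m (s / √v / √(1 + τ))) := by
  rw [lyapunov, profile, Real.sqrt_mul (by linarith), ← div_div,
    Real.mul_rpow (by linarith) (by linarith)]
  ring

lemma lyapunov_le_mul_one_add_of_small {τ : ℝ} (hτ0 : 0 ≤ τ) (hτ : τ ≤ (v ^ (-b)) ^ 2) :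
    lyapunov κ b m s v ≤ lyapunov κ b m s (v * (1 + τ)) - lyapunovRate κ b m s v * v * τ := by
  have hc := hP.correction_nonneg (v := v) (by linarith)
  have hW := window_pos m (s / √v)
  have hρ0 : 0 ≤ v ^ (-b) := by positivity
  have hρ1 := rpow_neg_le_one hP hv
  have hτ1 : τ ≤ 1 := hτ.trans (pow_le_one₀ hρ0 hρ1)
  have hrate : lyapunovRate κ b m s v * v
      = (-(s / √v) * φ (s / √v) - κ * v ^ (-b) * windowD2 m (s / √v)) / 2
        + 3900 * v ^ (-b) * window m (s / √v) := by
    rw [lyapunovRate, div_mul_cancel₀ _ (by linarith), profileD2]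
  rw [lyapunov_mul_one_add hv s hτ0, hrate, lyapunov, profile]
  set y := s / √v
  set ρ := v ^ (-b)
  have hΦ := (abs_le.1 (abs_stdNormalCDF_div_sqrt_sub_le hP.m_le_one y hτ0 hτ1)).1
  have hwindow := mul_le_mul_of_nonneg_left
    (rpow_mul_window_le_taylor hP.m_nonneg hP.m_lt_b.le hP.b_le_one y hτ0 hτ1) hc
  have hτsq : window m y * τ ^ 2 ≤ ρ * window m y * τ :=
    calc window m y * τ ^ 2 = τ * (window m y * τ) := by ring
      _ ≤ ρ * (window m y * τ) := by
        gcongr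
        exact hτ.trans (pow_le_of_le_one hρ0 hρ1 two_ne_zero)
      _ = ρ * window m y * τ := by ring
  have hcτsq : κ * ρ * (window m y * τ ^ 2) ≤ ρ * window m y * τ :=
    (mul_le_of_le_one_left (by positivity) hκ).trans hτsq
  have hgain : 10000 * (ρ * window m y * τ) ≤ κ * (b - m) * (ρ * window m y * τ) :=
    mul_le_mul_of_nonneg_right hP.le_amplitude (by positivity)
  have hslack : 0 ≤ ρ * window m y * τ := by positivity
  linarith

lemma lyapunov_le_mul_one_add_of_large {τ : ℝ} (hτ0 : 0 ≤ τ) (hτ : (v ^ (-b)) ^ 2 ≤ τ) :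
    lyapunov κ b m s v ≤ lyapunov κ b m s (v * (1 + τ)) - lyapunovRate κ b m s v * v * τ
      + 6000 * (τ * v) ^ p := by
  have hlarge := le_rpow_of_sq_rpow_neg_le hP.one_lt_p hP.exponent_le hv hτ
  have hrate : lyapunovRate κ b m s v * v * τ ≤ 4600 * τ :=
    mul_le_mul_of_nonneg_right (abs_le.1 (abs_lyapunovRate_mul_le hP hv hκ s)).2 hτ0
  have hwindow := mul_le_mul_of_nonneg_left
    (rpow_mul_window_le hP.m_nonneg hP.m_lt_b.le (s / √v) hτ0)
    (hP.correction_nonneg (v := v) (by linarith))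
  have hΦ := abs_stdNormalCDF_div_sqrt_one_add_sub_le hτ0 (s / √v)
  rw [lyapunov_mul_one_add hv s hτ0, lyapunov, profile]
  linarith [(abs_le.1 hΦ).1]

lemma lyapunov_le_add_right {q : ℝ} (hq : 0 ≤ q) :
    lyapunov κ b m s v ≤ lyapunov κ b m s (v + q) - lyapunovRate κ b m s v * q
      + 6000 * q ^ p := by
  have hv0 : 0 < v := by linarith
  have hτ : 0 ≤ q / v := by positivity
  have hmul : v * (1 + q / v) = v + q := by field_simp
  have hrate : lyapunovRate κ b m s v * v * (q / v) = lyapunovRate κ b m s v * q := by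
    field_simp
  rcases le_total (q / v) ((v ^ (-b)) ^ 2) with hsmall | hlarge
  · have hle := lyapunov_le_mul_one_add_of_small hP hv hκ s hτ hsmall
    rw [hmul, hrate] at hle
    have hrest : 0 ≤ 6000 * q ^ p := by positivity
    linarith
  · have hle := lyapunov_le_mul_one_add_of_large hP hv hκ s hτ hlarge
    rwa [hmul, hrate, div_mul_cancel₀ _ hv0.ne'] at hle

lemma lyapunov_add_left_le_add_right (X : ℝ) {q : ℝ} (hq : 0 ≤ q) :
    lyapunov κ b m (s + X) v ≤ lyapunov κ b m s (v + q) + lyapunovGrad κ b m s v * X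
      + lyapunovRate κ b m s v * (X ^ 2 - q) + 6000 * ((X ^ 2) ^ p + q ^ p) := by
  have hspace := lyapunov_add_left_le hP hv hκ s X
  have htime := lyapunov_le_add_right hP hv hκ s hq
  have hpow : 0 ≤ (X ^ 2) ^ p := by positivity
  linarith

end Lyapunov

section Tails

lemma one_sub_stdNormalCDF_le_exp {y : ℝ} (hy : 0 ≤ y) : 1 - Φ y ≤ Real.exp (-y ^ 2 / 2) := by
  have hChernoff := ProbabilityTheory.measure_le_le_exp_mul_mgf
    (μ := ProbabilityTheory.gaussianReal 0 1) (X := id) (-y) (neg_nonpos.2 hy)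
    (ProbabilityTheory.integrable_exp_mul_gaussianReal (-y))
  rw [ProbabilityTheory.mgf_id_gaussianReal, ← Real.exp_add] at hChernoff
  rw [← stdNormalCDF_neg, stdNormalCDF_eq_cdf, ProbabilityTheory.cdf_eq_real]
  refine hChernoff.trans_eq (congrArg Real.exp ?_)
  push_cast
  ring

lemma one_sub_stdNormalCDF_le_window {m K y : ℝ} (hm : m ≤ 1) (hK : 0 < K) (hy : K ≤ y) :
    1 - Φ y ≤ 1200 / K ^ 2 * window m y := by
  have hK2 : K ^ 2 ≤ (1 + y ^ 2) ^ 2 := by nlinarith [sq_nonneg y]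
  have hW := window_pos m y
  calc 1 - Φ y ≤ Real.exp (-y ^ 2 / 2) := one_sub_stdNormalCDF_le_exp (hK.le.trans hy)
    _ ≤ Real.exp (-y ^ 2 / 4) := Real.exp_le_exp.2 (by linarith [sq_nonneg y])
    _ ≤ 1200 * window m y / (1 + y ^ 2) ^ 2 := by
      rw [le_div_iff₀' (by positivity)]
      exact one_add_sq_pow_mul_exp_le hm y
    _ ≤ 1200 * window m y / K ^ 2 := by gcongr
    _ = 1200 / K ^ 2 * window m y := by ring

lemma abs_lt_of_lt_window {m t y : ℝ} (hm : 0 < m) (ht : 0 < t) (h : t ≤ window m y) :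
    |y| < t ^ (-(1 / (2 * m))) := by
  refine abs_lt_of_sq_lt_sq ?_ (by positivity)
  calc y ^ 2 < 1 + y ^ 2 := by linarith
    _ = window m y ^ (-(1 / m)) := by
      rw [window, ← Real.rpow_mul (by positivity), show -m * -(1 / m) = 1 by field_simp,
        Real.rpow_one]
    _ ≤ t ^ (-(1 / m)) :=
      Real.rpow_le_rpow_of_nonpos ht h (neg_nonpos.2 (one_div_pos.2 hm).le)
    _ = (t ^ (-(1 / (2 * m)))) ^ 2 := by
      rw [← Real.rpow_mul_natCast ht.le]
      congr 1
      push_cast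
      field_simp

lemma integral_add_mul_rpow_neg (A B : ℝ) {α : ℝ} (hα : α < 1) :
    IntegrableOn (fun t : ℝ => A + B * t ^ (-α)) (Set.Ioc 0 1) ∧
      ∫ t in Set.Ioc (0 : ℝ) 1, (A + B * t ^ (-α)) = A + B / (1 - α) := by
  have hrpow : IntervalIntegrable (fun t : ℝ => t ^ (-α)) volume 0 1 :=
    intervalIntegral.intervalIntegrable_rpow' (by linarith)
  refine ⟨(intervalIntegrable_iff_integrableOn_Ioc_of_le zero_le_one).1
    (intervalIntegrable_const.add (hrpow.const_mul B)), ?_⟩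
  rw [← intervalIntegral.integral_of_le zero_le_one,
    intervalIntegral.integral_add intervalIntegrable_const (hrpow.const_mul B),
    intervalIntegral.integral_const_mul, integral_rpow (Or.inl (by linarith)),
    intervalIntegral.integral_const, Real.zero_rpow (by linarith), Real.one_rpow, neg_add_eq_sub]
  simp [div_eq_mul_inv]

lemma integrable_window_comp {Ω : Type*} {mΩ : MeasurableSpace Ω} {μ : Measure Ω}
    [IsFiniteMeasure μ] {Y : Ω → ℝ} (hY : Measurable Y) {m : ℝ} (hm : 0 ≤ m) :
    Integrable (fun ω => window m (Y ω)) μ := by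
  refine Integrable.of_bound (C := 1)
    ((measurable_window m).comp hY).aestronglyMeasurable (ae_of_all _ fun ω => ?_)
  rw [Real.norm_of_nonneg (window_pos _ _).le]
  exact window_le_one hm _

lemma integral_window_le_of_measureReal_ball_le {Ω : Type*} {mΩ : MeasurableSpace Ω}
    {μ : Measure Ω} [IsFiniteMeasure μ] {T : Ω → ℝ} (hT : Measurable T) {m A B : ℝ}
    (hm : 1 / 2 < m) (z : ℝ) (hball : ∀ r > 0, μ.real {ω | |T ω - z| < r} ≤ A + B * r)
    {δ : ℝ} (hδ : 0 < δ) :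
    ∫ ω, window m ((z - T ω) / δ) ∂μ ≤ A + B * δ / (1 - 1 / (2 * m)) := by
  have hm0 : 0 < m := by linarith
  have hint : Integrable (fun ω => window m ((z - T ω) / δ)) μ :=
    integrable_window_comp ((hT.const_sub z).div_const δ) hm0.le
  obtain ⟨hint_bound, hbound⟩ := integral_add_mul_rpow_neg A (B * δ) (α := 1 / (2 * m))
    ((div_lt_one (by linarith)).2 (by linarith))
  rw [hint.integral_eq_integral_Ioc_meas_le (M := 1) (ae_of_all _ fun ω => (window_pos _ _).le)
    (ae_of_all _ fun ω => window_le_one hm0.le _), ← hbound]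
  refine integral_mono_of_nonneg (ae_of_all _ fun t => measureReal_nonneg) hint_bound
    ((ae_restrict_iff' measurableSet_Ioc).2 (ae_of_all _ fun t ht => ?_))
  have ht0 : 0 < t := ht.1
  have hsub : {ω | t ≤ window m ((z - T ω) / δ)}
      ⊆ {ω | |T ω - z| < δ * t ^ (-(1 / (2 * m)))} := fun ω hω => by
    have hlt := abs_lt_of_lt_window hm0 ht0 hω
    rwa [abs_div, abs_of_pos hδ, div_lt_iff₀' hδ, abs_sub_comm] at hlt
  exact (measureReal_mono hsub).trans ((hball _ (by positivity)).trans_eq (by ring))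

end Tails

/-! ### Martingale differences -/

section MartingaleDifference

variable {Ω : Type*} {mΩ : MeasurableSpace Ω} {μ : Measure Ω}

/-- `X` is a sequence of martingale differences with finite moments of order `2 * p`, and `c i` is a
nonnegative `ℱ i`-measurable version of the conditional variance of `X i`. The time index is shifted
against the usual one: `X i` is `ℱ (i + 1)`-measurable and centred given `ℱ i`. -/
structure IsMartingaleDifference (p : ℝ) (μ : Measure Ω) (ℱ : Filtration ℕ mΩ) (X c : ℕ → Ω → ℝ) :
    Prop where
  stronglyMeasurable (i : ℕ) : StronglyMeasurable[ℱ (i + 1)] (X i)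
  integrable_sq_rpow (i : ℕ) : Integrable (fun ω => (X i ω ^ 2) ^ p) μ
  condExp_eq_zero (i : ℕ) : μ[X i | ℱ i] =ᵐ[μ] 0
  stronglyMeasurable_variance (i : ℕ) : StronglyMeasurable[ℱ i] (c i)
  variance_nonneg (i : ℕ) (ω : Ω) : 0 ≤ c i ω
  condExp_sq (i : ℕ) : μ[fun ω => X i ω ^ 2 | ℱ i] =ᵐ[μ] c i

lemma sq_rpow_mul_le {p C x y : ℝ} (hp : 0 ≤ p) (hy : |y| ≤ C) :
    ((y * x) ^ 2) ^ p ≤ (C ^ 2) ^ p * (x ^ 2) ^ p := by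
  rw [mul_pow, Real.mul_rpow (sq_nonneg y) (sq_nonneg x)]
  refine mul_le_mul_of_nonneg_right (Real.rpow_le_rpow (sq_nonneg y) ?_ hp) (by positivity)
  exact sq_le_sq' (abs_le.1 hy).1 (abs_le.1 hy).2

lemma condExp_mul_ae_eq {m : MeasurableSpace Ω} {h Z g : Ω → ℝ}
    (hh : StronglyMeasurable[m] h) (hhZ : Integrable (fun ω => h ω * Z ω) μ) (hZ : Integrable Z μ)
    (hg : μ[Z | m] =ᵐ[μ] g) : μ[fun ω => h ω * Z ω | m] =ᵐ[μ] fun ω => h ω * g ω := by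
  filter_upwards [condExp_mul_of_stronglyMeasurable_left hh hhZ hZ, hg] with ω hpull hgω
  rw [← hgω]
  exact hpull

lemma integrable_mul_of_abs_le {h Z : Ω → ℝ} {C : ℝ} (hh : Measurable h) (hC : ∀ ω, |h ω| ≤ C)
    (hZ : Integrable Z μ) : Integrable (fun ω => h ω * Z ω) μ :=
  hZ.bdd_mul hh.aestronglyMeasurable (ae_of_all _ hC)

lemma integral_mul_eq_zero_of_condExp_eq_zero [IsFiniteMeasure μ] {m : MeasurableSpace Ω}
    (hm : m ≤ mΩ) {h Z : Ω → ℝ} {C : ℝ} (hh : Measurable[m] h) (hC : ∀ ω, |h ω| ≤ C)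
    (hZ : Integrable Z μ) (h0 : μ[Z | m] =ᵐ[μ] 0) : ∫ ω, h ω * Z ω ∂μ = 0 := by
  have hhZ := integrable_mul_of_abs_le (hh.mono hm le_rfl) hC hZ
  have hcond := condExp_mul_ae_eq hh.stronglyMeasurable hhZ hZ h0
  rw [← integral_condExp hm, integral_congr_ae hcond]
  simp

namespace IsMartingaleDifference

variable {ℱ : Filtration ℕ mΩ} {p : ℝ} {X c : ℕ → Ω → ℝ}

section Basic

variable (hX : IsMartingaleDifference p μ ℱ X c)

include hX

lemma measurable (i : ℕ) : Measurable (X i) :=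
  (hX.stronglyMeasurable i).measurable.mono (ℱ.le _) le_rfl

lemma measurable_variance (i : ℕ) : Measurable (c i) :=
  (hX.stronglyMeasurable_variance i).measurable.mono (ℱ.le _) le_rfl

lemma measurable_sum (z : ℝ) (k : ℕ) : Measurable[ℱ k] fun ω => z + ∑ i ∈ range k, X i ω :=
  measurable_const.add <| Finset.measurable_fun_sum _ fun i hi =>
    (hX.stronglyMeasurable i).measurable.mono (ℱ.mono (mem_range.1 hi)) le_rfl

lemma measurable_sum_variance (k : ℕ) : Measurable[ℱ k] fun ω => ∑ i ∈ range (k + 1), c i ω :=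
  Finset.measurable_fun_sum _ fun i hi => (hX.stronglyMeasurable_variance i).measurable.mono
    (ℱ.mono (Nat.lt_succ_iff.1 (mem_range.1 hi))) le_rfl

lemma sum_variance_mono {j k : ℕ} (hjk : j ≤ k) (ω : Ω) :
    ∑ i ∈ range j, c i ω ≤ ∑ i ∈ range k, c i ω :=
  sum_le_sum_of_subset_of_nonneg (range_mono hjk) fun i _ _ => hX.variance_nonneg i ω

lemma integrable_variance (i : ℕ) : Integrable (c i) μ :=
  integrable_condExp.congr (hX.condExp_sq i)

end Basic

section Jensen

variable (hX : IsMartingaleDifference p μ ℱ X c) (hp : 1 ≤ p)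

include hX hp

lemma integrable_variance_rpow (i : ℕ) : Integrable (fun ω => c i ω ^ p) μ := by
  have hsq : Integrable (fun ω => ‖X i ω ^ 2‖ ^ p) μ := by
    simpa only [norm_pow, Real.norm_eq_abs, sq_abs] using hX.integrable_sq_rpow i
  refine (integrable_condExp (m := ℱ i) (f := fun ω => ‖X i ω ^ 2‖ ^ p)).mono'
    ((hX.measurable_variance i).pow_const p).aestronglyMeasurable ?_
  filter_upwards [Integrable.norm_condExp_rpow_le (m := ℱ i) hp hsq, hX.condExp_sq i]
    with ω hJensen hc
  rw [hc, Real.norm_of_nonneg (hX.variance_nonneg i ω)] at hJensen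
  rwa [Real.norm_of_nonneg (Real.rpow_nonneg (hX.variance_nonneg i ω) p)]

lemma integral_variance_rpow_le (i : ℕ) : ∫ ω, c i ω ^ p ∂μ ≤ ∫ ω, (X i ω ^ 2) ^ p ∂μ := by
  have hsq : (fun ω => ‖X i ω ^ 2‖ ^ p) = fun ω => (X i ω ^ 2) ^ p := by
    simp only [norm_pow, Real.norm_eq_abs, sq_abs]
  have hJensen := integral_norm_condExp_rpow_le (μ := μ) (m := ℱ i) hp
    (hsq ▸ hX.integrable_sq_rpow i)
  rw [hsq] at hJensen
  refine le_of_eq_of_le (integral_congr_ae ?_) hJensen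
  filter_upwards [hX.condExp_sq i] with ω hc
  rw [hc, Real.norm_of_nonneg (hX.variance_nonneg i ω)]

end Jensen

section Integrability

variable [IsFiniteMeasure μ] (hX : IsMartingaleDifference p μ ℱ X c) (hp : 1 ≤ p)

include hX

include hp

lemma integrable_sq (i : ℕ) : Integrable (fun ω => X i ω ^ 2) μ := by
  refine ((integrable_const (1 : ℝ)).add (hX.integrable_sq_rpow i)).mono'
    ((hX.measurable i).pow_const 2).aestronglyMeasurable (ae_of_all _ fun ω => ?_)
  rw [Real.norm_of_nonneg (sq_nonneg _), Pi.add_apply]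
  have hpow : 0 ≤ (X i ω ^ 2) ^ p := by positivity
  rcases le_total (X i ω ^ 2) 1 with hle | hge
  · linarith
  · linarith [Real.self_le_rpow_of_one_le hge hp]

lemma integrable (i : ℕ) : Integrable (X i) μ :=
  ((memLp_two_iff_integrable_sq (hX.measurable i).aestronglyMeasurable).2
    (hX.integrable_sq hp i)).integrable one_le_two

lemma condExp_sq_sub_variance (i : ℕ) : μ[fun ω => X i ω ^ 2 - c i ω | ℱ i] =ᵐ[μ] 0 := by
  have hc := hX.integrable_variance i
  filter_upwards [condExp_sub (hX.integrable_sq hp i) hc (ℱ i), hX.condExp_sq i] with ω hsub hsq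
  rw [Pi.sub_apply, hsq, condExp_of_stronglyMeasurable (ℱ.le i) (hX.stronglyMeasurable_variance i)
    hc, sub_self] at hsub
  exact hsub

end Integrability

section Transform

variable [IsFiniteMeasure μ] (hX : IsMartingaleDifference p μ ℱ X c) (hp : 1 ≤ p)
  {a : ℕ → Ω → ℝ} {C : ℝ}

include hX hp

lemma predictable_mul (ha : ∀ i, StronglyMeasurable[ℱ i] (a i)) (hC : ∀ i ω, |a i ω| ≤ C) :
    IsMartingaleDifference p μ ℱ (fun i ω => a i ω * X i ω) (fun i ω => a i ω ^ 2 * c i ω) where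
  stronglyMeasurable i := ((ha i).mono (ℱ.mono i.le_succ)).mul (hX.stronglyMeasurable i)
  integrable_sq_rpow i := by
    have haX : Measurable fun ω => a i ω * X i ω :=
      ((ha i).measurable.mono (ℱ.le i) le_rfl).mul (hX.measurable i)
    refine ((hX.integrable_sq_rpow i).const_mul ((C ^ 2) ^ p)).mono'
      ((haX.pow_const 2).pow_const p).aestronglyMeasurable (ae_of_all _ fun ω => ?_)
    rw [Real.norm_of_nonneg (by positivity)]
    exact sq_rpow_mul_le (by linarith) (hC i ω)
  condExp_eq_zero i := by
    have haX := integrable_mul_of_abs_le ((ha i).measurable.mono (ℱ.le i) le_rfl) (hC i)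
      (hX.integrable hp i)
    refine (condExp_mul_ae_eq (ha i) haX (hX.integrable hp i) (hX.condExp_eq_zero i)).trans
      (ae_of_all _ fun ω => ?_)
    simp
  stronglyMeasurable_variance i := ((ha i).pow 2).mul (hX.stronglyMeasurable_variance i)
  variance_nonneg i ω := mul_nonneg (sq_nonneg _) (hX.variance_nonneg i ω)
  condExp_sq i := by
    have hsq : ∀ ω, |a i ω ^ 2| ≤ C ^ 2 := fun ω => by
      rw [abs_pow]
      exact pow_le_pow_left₀ (abs_nonneg _) (hC i ω) 2
    simp only [mul_pow]
    exact condExp_mul_ae_eq ((ha i).pow 2) (integrable_mul_of_abs_le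
      (((ha i).pow 2).measurable.mono (ℱ.le i) le_rfl) hsq (hX.integrable_sq hp i))
      (hX.integrable_sq hp i) (hX.condExp_sq i)

lemma sum_integral_predictable_mul_le (ha : ∀ i, StronglyMeasurable[ℱ i] (a i))
    (hC : ∀ i ω, |a i ω| ≤ C) (n : ℕ) :
    ∑ i ∈ range n, ∫ ω, ((a i ω * X i ω) ^ 2) ^ p ∂μ
      ≤ (C ^ 2) ^ p * ∑ i ∈ range n, ∫ ω, (X i ω ^ 2) ^ p ∂μ := by
  rw [mul_sum]
  refine sum_le_sum fun i _ => ?_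
  rw [← integral_const_mul]
  exact integral_mono ((hX.predictable_mul hp ha hC).integrable_sq_rpow i)
    ((hX.integrable_sq_rpow i).const_mul _) fun ω => sq_rpow_mul_le (by linarith) (hC i ω)

lemma const_mul (r : ℝ) :
    IsMartingaleDifference p μ ℱ (fun i ω => r * X i ω) (fun i ω => r ^ 2 * c i ω) :=
  hX.predictable_mul hp (a := fun _ _ => r) (fun _ => stronglyMeasurable_const) fun _ _ => le_rfl

end Transform

end IsMartingaleDifference

end MartingaleDifference

section Telescoping

variable {Ω : Type*} {mΩ : MeasurableSpace Ω} {μ : Measure Ω} {p κ b m L : ℝ}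
  (hP : LyapunovParams p κ b m) (hL : 1 ≤ L) (hκ : κ * L ^ (-b) ≤ 1)

include hP hL hκ

lemma mul_rpow_neg_le_one {v : ℝ} (hv : L ≤ v) : κ * v ^ (-b) ≤ 1 :=
  (mul_le_mul_of_nonneg_left (Real.rpow_le_rpow_of_nonpos (by linarith) hv
    (neg_nonpos.2 hP.b_pos.le)) hP.κ_pos.le).trans hκ

lemma abs_lyapunov_le (s : ℝ) {v : ℝ} (hv : L ≤ v) : |lyapunov κ b m s v| ≤ 2 := by
  have hc0 : 0 ≤ κ * v ^ (-b) := hP.correction_nonneg (by linarith)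
  have hW0 := window_pos m (s / √v)
  have hcW := mul_le_one₀ (mul_rpow_neg_le_one hP hL hκ hv) hW0.le
    (window_le_one hP.m_nonneg (s / √v))
  have hcW0 := mul_nonneg hc0 hW0.le
  have hΦ0 := stdNormalCDF_nonneg (s / √v)
  have hΦ1 := stdNormalCDF_le_one (s / √v)
  rw [lyapunov, profile, abs_le]
  constructor <;> linarith

lemma integrable_lyapunov_comp [IsFiniteMeasure μ] {s v : Ω → ℝ} (hs : Measurable s)
    (hv : Measurable v) (hLv : ∀ ω, L ≤ v ω) :
    Integrable (fun ω => lyapunov κ b m (s ω) (v ω)) μ :=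
  Integrable.of_bound (C := 2)
    ((measurable_lyapunov κ b m).comp (hs.prodMk hv)).aestronglyMeasurable
    (ae_of_all _ fun ω => abs_lyapunov_le hP hL hκ (s ω) (hLv ω))

variable [IsProbabilityMeasure μ] {ℱ : Filtration ℕ mΩ} {X c : ℕ → Ω → ℝ}
  (hX : IsMartingaleDifference p μ ℱ X c)

include hX

lemma integral_lyapunovGrad_mul_eq_zero (i : ℕ) {s v : Ω → ℝ} (hs : Measurable[ℱ i] s)
    (hv : Measurable[ℱ i] v) (hLv : ∀ ω, L ≤ v ω) :
    Integrable (fun ω => lyapunovGrad κ b m (s ω) (v ω) * X i ω) μ ∧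
      ∫ ω, lyapunovGrad κ b m (s ω) (v ω) * X i ω ∂μ = 0 := by
  have hX1 := hX.integrable hP.one_lt_p.le i
  have hG := (measurable_lyapunovGrad κ b m).comp (hs.prodMk hv)
  have hG_le : ∀ ω, |lyapunovGrad κ b m (s ω) (v ω)| ≤ 3 := fun ω =>
    abs_lyapunovGrad_le hP (hL.trans (hLv ω)) (mul_rpow_neg_le_one hP hL hκ (hLv ω)) (s ω)
  exact ⟨integrable_mul_of_abs_le (hG.mono (ℱ.le i) le_rfl) hG_le hX1,
    integral_mul_eq_zero_of_condExp_eq_zero (ℱ.le i) hG hG_le hX1 (hX.condExp_eq_zero i)⟩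

lemma integral_lyapunovRate_mul_eq_zero (i : ℕ) {s v : Ω → ℝ} (hs : Measurable[ℱ i] s)
    (hv : Measurable[ℱ i] v) (hLv : ∀ ω, L ≤ v ω) :
    Integrable (fun ω => lyapunovRate κ b m (s ω) (v ω) * (X i ω ^ 2 - c i ω)) μ ∧
      ∫ ω, lyapunovRate κ b m (s ω) (v ω) * (X i ω ^ 2 - c i ω) ∂μ = 0 := by
  have hp : 1 ≤ p := hP.one_lt_p.le
  have hX2 : Integrable (fun ω => X i ω ^ 2 - c i ω) μ :=
    (hX.integrable_sq hp i).sub (hX.integrable_variance i)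
  have hR := (measurable_lyapunovRate κ b m).comp (hs.prodMk hv)
  have hR_le : ∀ ω, |lyapunovRate κ b m (s ω) (v ω)| ≤ 4600 := fun ω => by
    have hv1 := hL.trans (hLv ω)
    refine le_trans ?_
      (abs_lyapunovRate_mul_le hP hv1 (mul_rpow_neg_le_one hP hL hκ (hLv ω)) (s ω))
    rw [abs_mul]
    exact le_mul_of_one_le_right (abs_nonneg _) (hv1.trans (le_abs_self _))
  exact ⟨integrable_mul_of_abs_le (hR.mono (ℱ.le i) le_rfl) hR_le hX2,
    integral_mul_eq_zero_of_condExp_eq_zero (ℱ.le i) hR hR_le hX2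
      (hX.condExp_sq_sub_variance hp i)⟩

lemma integral_lyapunov_step_le (i : ℕ) {s v : Ω → ℝ} (hs : Measurable[ℱ i] s)
    (hv : Measurable[ℱ i] v) (hLv : ∀ ω, L ≤ v ω) :
    ∫ ω, lyapunov κ b m (s ω + X i ω) (v ω) ∂μ
      ≤ ∫ ω, lyapunov κ b m (s ω) (v ω + c i ω) ∂μ + 12000 * ∫ ω, (X i ω ^ 2) ^ p ∂μ := by
  have hp : 1 ≤ p := hP.one_lt_p.le
  have hsΩ : Measurable s := hs.mono (ℱ.le i) le_rfl
  have hvΩ : Measurable v := hv.mono (ℱ.le i) le_rfl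
  obtain ⟨hG_int, hG_zero⟩ := integral_lyapunovGrad_mul_eq_zero hP hL hκ hX i hs hv hLv
  obtain ⟨hR_int, hR_zero⟩ := integral_lyapunovRate_mul_eq_zero hP hL hκ hX i hs hv hLv
  have hpow_int := ((hX.integrable_sq_rpow i).add (hX.integrable_variance_rpow hp i)).const_mul 6000
  have hL_int : Integrable (fun ω => lyapunov κ b m (s ω) (v ω + c i ω)) μ :=
    integrable_lyapunov_comp hP hL hκ hsΩ (hvΩ.add (hX.measurable_variance i))
      fun ω => le_add_of_le_of_nonneg (hLv ω) (hX.variance_nonneg i ω)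
  have hmono := integral_mono
    (integrable_lyapunov_comp hP hL hκ (hsΩ.add (hX.measurable i)) hvΩ hLv)
    (((hL_int.add hG_int).add hR_int).add hpow_int) fun ω =>
      lyapunov_add_left_le_add_right hP (hL.trans (hLv ω))
        (mul_rpow_neg_le_one hP hL hκ (hLv ω)) (s ω) (X i ω) (hX.variance_nonneg i ω)
  rw [integral_add' ((hL_int.add hG_int).add hR_int) hpow_int,
    integral_add' (hL_int.add hG_int) hR_int, integral_add' hL_int hG_int, integral_const_mul,
    integral_add' (hX.integrable_sq_rpow i) (hX.integrable_variance_rpow hp i),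
    hG_zero, hR_zero] at hmono
  have hJensen := hX.integral_variance_rpow_le hp i
  simp only [Pi.add_apply] at hmono
  linarith

lemma integral_lyapunov_le {n : ℕ} {Λ : ℝ} (hΛ : ∀ ω, ∑ i ∈ range n, c i ω ≤ Λ - L) (z : ℝ) :
    ∫ ω, lyapunov κ b m (z + ∑ i ∈ range n, X i ω) (Λ - ∑ i ∈ range n, c i ω) ∂μ
      ≤ lyapunov κ b m z Λ + 12000 * ∑ i ∈ range n, ∫ ω, (X i ω ^ 2) ^ p ∂μ := by
  suffices ∀ k ≤ n,
      ∫ ω, lyapunov κ b m (z + ∑ i ∈ range k, X i ω) (Λ - ∑ i ∈ range k, c i ω) ∂μ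
        ≤ lyapunov κ b m z Λ + 12000 * ∑ i ∈ range k, ∫ ω, (X i ω ^ 2) ^ p ∂μ from this n le_rfl
  intro k
  induction k with
  | zero => simp
  | succ k ih =>
    intro hk
    have hstep := integral_lyapunov_step_le hP hL hκ hX k (hX.measurable_sum z k)
      ((hX.measurable_sum_variance k).const_sub Λ)
      fun ω => by linarith [hX.sum_variance_mono hk ω, hΛ ω]
    simp only [sum_range_succ _ k, mul_add, ← add_assoc, ← sub_sub, sub_add_cancel] at hstep ⊢
    linarith [ih (Nat.le_of_succ_le hk)]

end Telescoping

section Smoothing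

variable {p κ b m L : ℝ} (hP : LyapunovParams p κ b m)

include hP

lemma rpow_neg_mul_window_div_sqrt_le (s : ℝ) {u v : ℝ} (hu : 0 < u) (huv : u ≤ v) :
    v ^ (-b) * window m (s / √v) ≤ u ^ (-b) * window m (s / √u) := by
  have hτ : 0 ≤ v / u - 1 := sub_nonneg.2 ((one_le_div hu).2 huv)
  have hv : u * (1 + (v / u - 1)) = v := by field_simp; ring
  calc v ^ (-b) * window m (s / √v)
      = u ^ (-b) * ((1 + (v / u - 1)) ^ (-b) * window m (s / √u / √(1 + (v / u - 1)))) := by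
        rw [div_div, ← Real.sqrt_mul hu.le, ← mul_assoc, ← Real.mul_rpow hu.le (by linarith), hv]
    _ ≤ u ^ (-b) * window m (s / √u) :=
        mul_le_mul_of_nonneg_left (rpow_mul_window_le hP.m_nonneg hP.m_lt_b.le _ hτ)
          (Real.rpow_nonneg hu.le _)

lemma lyapunov_le_stdNormalCDF_add {ε a : ℝ} (hε : 0 < ε) (ha : 0 ≤ a) (x : ℝ) :
    lyapunov κ b m (x / ε) ((1 + a) / ε ^ 2) ≤ Φ x + a := by
  have hcorrection := mul_nonneg (hP.correction_nonneg (v := (1 + a) / ε ^ 2) (by positivity))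
    (window_pos m (x / ε / √((1 + a) / ε ^ 2))).le
  have hpos : x / ε / √((1 + a) / ε ^ 2) = x / √(1 + a) := by
    rw [Real.sqrt_div (by linarith), Real.sqrt_sq hε.le]
    field_simp
  have hΦ := (abs_le.1 (abs_stdNormalCDF_div_sqrt_one_add_sub_le ha x)).2
  rw [lyapunov, profile]
  rw [hpos] at hcorrection ⊢
  linarith

variable (hL : 1 ≤ L) (hκ : κ * L ^ (-b) ≤ 1 / 8)

include hL hκ

lemma mul_rpow_neg_mul_window_le (s : ℝ) {v : ℝ} (hv : L ≤ v) :
    κ * v ^ (-b) * window m (s / √v) ≤ 1 / 8 * window m (s / √(L + 2)) := by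
  have hL0 : 0 < L := by linarith
  have hwiden : window m (s / √L) ≤ window m (s / √(L + 2)) := by
    refine Real.rpow_le_rpow_of_nonpos (by positivity) ?_ (neg_nonpos.2 hP.m_nonneg)
    rw [div_pow, div_pow, Real.sq_sqrt hL0.le, Real.sq_sqrt (by linarith)]
    gcongr
    linarith
  calc κ * v ^ (-b) * window m (s / √v) ≤ κ * (L ^ (-b) * window m (s / √L)) := by
        rw [mul_assoc]
        exact mul_le_mul_of_nonneg_left (rpow_neg_mul_window_div_sqrt_le hP s hL0 hv) hP.κ_pos.le
    _ = κ * L ^ (-b) * window m (s / √L) := by rw [mul_assoc]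
    _ ≤ 1 / 8 * window m (s / √(L + 2)) :=
        mul_le_mul hκ hwiden (window_pos _ _).le (by norm_num)

lemma neg_window_le_lyapunov (s : ℝ) {v : ℝ} (hv : L ≤ v) :
    -(1 / 8 * window m (s / √(L + 2))) ≤ lyapunov κ b m s v := by
  rw [lyapunov, profile]
  linarith [mul_rpow_neg_mul_window_le hP hL hκ s hv, stdNormalCDF_nonneg (s / √v)]

lemma one_sub_window_le_lyapunov {s v : ℝ} (hLv : L ≤ v) (hvL : v ≤ L + 2)
    (hs : 100 ≤ s / √(L + 2)) :
    1 - 1 / 4 * window m (s / √(L + 2)) ≤ lyapunov κ b m s v := by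
  have hsqrt : 0 < √(L + 2) := Real.sqrt_pos.2 (by linarith)
  have hs0 : 0 ≤ s := by
    rw [le_div_iff₀ hsqrt] at hs
    linarith
  have hquot : s / √(L + 2) ≤ s / √v :=
    div_le_div_of_nonneg_left hs0 (Real.sqrt_pos.2 (by linarith)) (Real.sqrt_le_sqrt hvL)
  have hΦ : Φ (s / √(L + 2)) ≤ Φ (s / √v) := by
    simp only [stdNormalCDF_eq_cdf]
    exact ProbabilityTheory.monotone_cdf _ hquot
  have htail := one_sub_stdNormalCDF_le_window hP.m_le_one (by norm_num) hs
  rw [lyapunov, profile]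
  linarith [mul_rpow_neg_mul_window_le hP hL hκ s hLv, window_pos m (s / √(L + 2))]

lemma indicator_le_lyapunov_add_window (s : ℝ) {v : ℝ} (hv : L ≤ v) :
    (Set.Ici 100).indicator 1 (s / √(L + 2))
      ≤ (Set.Ioi (L + 2)).indicator 1 v + lyapunov κ b m s v
        + 1 / 4 * window m (s / √(L + 2)) := by
  have hlow := neg_window_le_lyapunov hP hL hκ s hv
  have hW := window_pos m (s / √(L + 2))
  have hind : 0 ≤ (Set.Ioi (L + 2)).indicator (1 : ℝ → ℝ) v :=
    Set.indicator_nonneg (fun _ _ => zero_le_one) v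
  by_cases hs : 100 ≤ s / √(L + 2)
  · rw [Set.indicator_of_mem (Set.mem_Ici.2 hs), Pi.one_apply]
    rcases le_or_gt v (L + 2) with hvL | hvL
    · linarith [one_sub_window_le_lyapunov hP hL hκ hv hvL hs]
    · rw [Set.indicator_of_mem (Set.mem_Ioi.2 hvL), Pi.one_apply]
      linarith
  · rw [Set.indicator_of_notMem (mt Set.mem_Ici.1 hs)]
    linarith

lemma measureReal_le_integral_lyapunov {Ω : Type*} {mΩ : MeasurableSpace Ω} {μ : Measure Ω}
    [IsFiniteMeasure μ] {Y V : Ω → ℝ} (hY : Measurable Y) (hV : Measurable V)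
    (hLV : ∀ ω, L ≤ V ω) :
    μ.real {ω | 100 ≤ Y ω / √(L + 2)}
      ≤ μ.real {ω | L + 2 < V ω} + ∫ ω, lyapunov κ b m (Y ω) (V ω) ∂μ
        + 1 / 4 * ∫ ω, window m (Y ω / √(L + 2)) ∂μ := by
  have hA : MeasurableSet {ω | 100 ≤ Y ω / √(L + 2)} :=
    measurableSet_le measurable_const (hY.div_const _)
  have hG : MeasurableSet {ω | L + 2 < V ω} := measurableSet_lt measurable_const hV
  have hA_int : Integrable ({ω | 100 ≤ Y ω / √(L + 2)}.indicator (1 : Ω → ℝ)) μ :=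
    (integrable_const 1).indicator hA
  have hG_int : Integrable ({ω | L + 2 < V ω}.indicator (1 : Ω → ℝ)) μ :=
    (integrable_const 1).indicator hG
  have hF_int : Integrable (fun ω => lyapunov κ b m (Y ω) (V ω)) μ :=
    integrable_lyapunov_comp hP hL (hκ.trans (by norm_num)) hY hV hLV
  have hW_int : Integrable (fun ω => 1 / 4 * window m (Y ω / √(L + 2))) μ :=
    (integrable_window_comp (hY.div_const _) hP.m_nonneg).const_mul _
  rw [← integral_indicator_one hA, ← integral_indicator_one hG, ← integral_const_mul,
    ← integral_add' hG_int hF_int, ← integral_add' (hG_int.add hF_int) hW_int]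
  exact integral_mono hA_int ((hG_int.add hF_int).add hW_int) fun ω =>
    indicator_le_lyapunov_add_window hP hL hκ (Y ω) (hLV ω)

end Smoothing

/-! ### Martingales with bounded total conditional variance -/

section OneSided

/-- The factor of the scale `ε` in the smoothing inequality, for the window exponent `m` and the
reserve `L` of variance. -/
noncomputable def smoothingConst (m L : ℝ) : ℝ :=
  12002 + L + (100 + (2 * (1 - 1 / (2 * m)))⁻¹) * √(L + 2)

variable {Ω : Type*} {mΩ : MeasurableSpace Ω} {μ : Measure Ω} [IsProbabilityMeasure μ]
  {ℱ : Filtration ℕ mΩ} {T R : ℕ → Ω → ℝ} {n : ℕ} {p κ b m L ε D : ℝ}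

lemma measureReal_ball_le_of_abs_sub_stdNormalCDF_le {Y : Ω → ℝ} (hY : Measurable Y)
    (hD : ∀ y, |μ.real {ω | Y ω ≤ y} - Φ y| ≤ D) (z : ℝ) {r : ℝ} (hr : 0 < r) :
    μ.real {ω | |Y ω - z| < r} ≤ 2 * D + 2 * r := by
  have hsub : {ω | Y ω ≤ z - r} ⊆ {ω | Y ω ≤ z + r} :=
    Set.ofPred_subset_ofPred.2 fun ω hω => hω.trans (by linarith)
  have hball : μ.real {ω | |Y ω - z| < r}
      ≤ μ.real {ω | Y ω ≤ z + r} - μ.real {ω | Y ω ≤ z - r} := by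
    rw [← measureReal_sdiff hsub (measurableSet_le hY measurable_const)]
    refine measureReal_mono fun ω hω => ?_
    simp only [Set.mem_ofPred_eq, abs_lt] at hω
    simp only [Set.mem_sdiff, Set.mem_ofPred_eq, not_le]
    constructor <;> linarith
  have hΦ := (abs_le.1 (abs_stdNormalCDF_sub_le (z + r) (z - r))).2
  rw [show z + r - (z - r) = 2 * r by ring, abs_of_pos (by linarith)] at hΦ
  linarith [(abs_le.1 (hD (z + r))).2, (abs_le.1 (hD (z - r))).1]

variable (hP : LyapunovParams p κ b m) (hL : 1 ≤ L)
  (hT : IsMartingaleDifference p μ ℱ T R) (hε0 : 0 < ε) (hε1 : ε ≤ 1)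
  (hR : ∀ ω, ∑ i ∈ range n, R i ω ≤ 1 + ε ^ 2)
  (hpow : ∑ i ∈ range n, ∫ ω, (T i ω ^ 2) ^ p ∂μ ≤ ε ^ (2 * p + 1))

include hP hL hT hε0 hε1 hR hpow

lemma integral_lyapunov_scaled_le (hκ : κ * L ^ (-b) ≤ 1) (x : ℝ) :
    ∫ ω, lyapunov κ b m ((x - ∑ i ∈ range n, T i ω) / ε)
        ((1 + ε ^ 2 - ∑ i ∈ range n, R i ω) / ε ^ 2 + L) ∂μ
      ≤ Φ x + (12001 + L) * ε := by
  have hp : 1 ≤ p := hP.one_lt_p.le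
  have hΛ : ∀ ω, ∑ i ∈ range n, (-ε⁻¹) ^ 2 * R i ω ≤ (1 + (1 + L) * ε ^ 2) / ε ^ 2 - L :=
    fun ω => by
    rw [← mul_sum, show (1 + (1 + L) * ε ^ 2) / ε ^ 2 - L = (-ε⁻¹) ^ 2 * (1 + ε ^ 2) by
      field_simp; ring]
    exact mul_le_mul_of_nonneg_left (hR ω) (sq_nonneg _)
  have hdrift := integral_lyapunov_le hP hL hκ (hT.const_mul hp (-ε⁻¹)) hΛ (x / ε)
  have hscaled : ∑ i ∈ range n, ∫ ω, ((-ε⁻¹ * T i ω) ^ 2) ^ p ∂μ ≤ ε :=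
    calc ∑ i ∈ range n, ∫ ω, ((-ε⁻¹ * T i ω) ^ 2) ^ p ∂μ
        ≤ (|-ε⁻¹| ^ 2) ^ p * ∑ i ∈ range n, ∫ ω, (T i ω ^ 2) ^ p ∂μ :=
          hT.sum_integral_predictable_mul_le hp (a := fun _ _ => -ε⁻¹)
            (fun _ => stronglyMeasurable_const) (fun _ _ => le_rfl) n
      _ ≤ (|-ε⁻¹| ^ 2) ^ p * ε ^ (2 * p + 1) := by gcongr
      _ = ε := by
          rw [sq_abs, neg_sq, inv_pow, Real.inv_rpow (by positivity),
            ← Real.rpow_natCast_mul hε0.le, ← Real.rpow_neg hε0.le, ← Real.rpow_add hε0]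
          norm_num
  have hstart := lyapunov_le_stdNormalCDF_add hP hε0 (a := (1 + L) * ε ^ 2) (by positivity) x
  have hstart_le : (1 + L) * ε ^ 2 ≤ (1 + L) * ε :=
    mul_le_mul_of_nonneg_left (by nlinarith) (by linarith)
  refine le_of_eq_of_le (integral_congr_ae (ae_of_all _ fun ω => ?_)) (hdrift.trans (by linarith))
  simp only [← mul_sum]
  congr 1 <;> field_simp <;> ring

variable (hκ : κ * L ^ (-b) ≤ 1 / 8)
  (hdev : μ.real {ω | ∑ i ∈ range n, R i ω < 1 - ε ^ 2} ≤ ε)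
  (hball : ∀ z, ∀ r > 0, μ.real {ω | |∑ i ∈ range n, T i ω - z| < r} ≤ 2 * D + 2 * r)

include hκ hdev hball

lemma measureReal_sum_le (x : ℝ) :
    μ.real {ω | ∑ i ∈ range n, T i ω ≤ x} ≤ Φ x + D / 2 + smoothingConst m L * ε := by
  have hsqrt : 0 < √(L + 2) := Real.sqrt_pos.2 (by linarith)
  have hS : Measurable fun ω => ∑ i ∈ range n, T i ω :=
    Finset.measurable_fun_sum _ fun i _ => hT.measurable i
  have hV : Measurable fun ω => ∑ i ∈ range n, R i ω :=
    Finset.measurable_fun_sum _ fun i _ => hT.measurable_variance i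
  set x' : ℝ := x + 100 * (ε * √(L + 2))
  have hsmooth := measureReal_le_integral_lyapunov (μ := μ) hP hL hκ ((hS.const_sub x').div_const ε)
    (((hV.const_sub (1 + ε ^ 2)).div_const (ε ^ 2)).add_const L) fun ω =>
      le_add_of_nonneg_left (div_nonneg (sub_nonneg.2 (hR ω)) (sq_nonneg ε))
  simp only [div_div] at hsmooth
  have hlower : μ.real {ω | ∑ i ∈ range n, T i ω ≤ x}
      ≤ μ.real {ω | 100 ≤ (x' - ∑ i ∈ range n, T i ω) / (ε * √(L + 2))} := by
    refine measureReal_mono fun ω hω => ?_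
    rw [Set.mem_ofPred_eq] at hω ⊢
    rw [le_div_iff₀ (mul_pos hε0 hsqrt)]
    linarith
  have hbudget : μ.real {ω | L + 2 < (1 + ε ^ 2 - ∑ i ∈ range n, R i ω) / ε ^ 2 + L} ≤ ε := by
    refine (measureReal_mono fun ω hω => ?_).trans hdev
    rw [Set.mem_ofPred_eq, add_comm L, add_lt_add_iff_right, lt_div_iff₀ (by positivity)] at hω
    rw [Set.mem_ofPred_eq]
    linarith
  have hdrift := integral_lyapunov_scaled_le hP hL hT hε0 hε1 hR hpow (hκ.trans (by norm_num)) x'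
  have hwindow := integral_window_le_of_measureReal_ball_le hS hP.half_lt_m x' (hball x')
    (by positivity : 0 < ε * √(L + 2))
  have hΦ := (abs_le.1 (abs_stdNormalCDF_sub_le x' x)).2
  rw [show x' - x = 100 * (ε * √(L + 2)) by ring, abs_of_pos (by positivity)] at hΦ
  have hconst : smoothingConst m L * ε = ε + (12001 + L) * ε + 100 * (ε * √(L + 2))
      + 1 / 4 * (2 * (ε * √(L + 2)) / (1 - 1 / (2 * m))) := by
    rw [smoothingConst, mul_inv]
    ring
  linarith

lemma abs_measureReal_sum_sub_stdNormalCDF_le (x : ℝ) :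
    |μ.real {ω | ∑ i ∈ range n, T i ω ≤ x} - Φ x| ≤ D / 2 + smoothingConst m L * ε := by
  have hupper := measureReal_sum_le hP hL hT hε0 hε1 hR hpow hκ hdev hball x
  have hneg := hT.const_mul hP.one_lt_p.le (-1)
  simp only [neg_one_mul, even_two, Even.neg_pow, one_pow, one_mul] at hneg
  have hball_neg : ∀ z, ∀ r > 0,
      μ.real {ω | |∑ i ∈ range n, -T i ω - z| < r} ≤ 2 * D + 2 * r := fun z r hr => by
    convert hball (-z) r hr using 5 with ω
    rw [sum_neg_distrib, ← abs_neg]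
    ring_nf
  have hlower := measureReal_sum_le hP hL hneg hε0 hε1 hR
    (by simpa only [even_two, Even.neg_pow] using hpow) hκ hdev hball_neg (-x)
  simp only [sum_neg_distrib, neg_le_neg_iff, stdNormalCDF_neg] at hlower
  have hcover : 1 ≤ μ.real {ω | ∑ i ∈ range n, T i ω ≤ x}
      + μ.real {ω | x ≤ ∑ i ∈ range n, T i ω} := by
    rw [← probReal_univ (μ := μ)]
    exact (measureReal_mono fun ω _ => le_total (∑ i ∈ range n, T i ω) x).trans
      (measureReal_union_le _ _)
  rw [abs_le]
  constructor <;> linarith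

end OneSided

section Bootstrap

lemma exists_lyapunovParams {p : ℝ} (hp : 1 < p) :
    ∃ κ b m L : ℝ, LyapunovParams p κ b m ∧ 1 ≤ L ∧ κ * L ^ (-b) ≤ 1 / 8 := by
  have hquarter : 1 / (4 * p) < 1 / 4 := one_div_lt_one_div_of_lt (by norm_num) (by linarith)
  have hquarter0 : 0 < 1 / (4 * p) := one_div_pos.2 (by linarith)
  set b : ℝ := 1 / 2 + 2 * (1 / (4 * p)) with hb
  set κ : ℝ := 10000 / (1 / (4 * p)) with hκ
  have hb0 : b ≠ 0 := by positivity
  have hκ0 : 0 < κ := by positivity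
  refine ⟨κ, b, 1 / 2 + 1 / (4 * p), (8 * κ) ^ b⁻¹, ⟨hp, ?_, ?_, ?_, ?_, ?_⟩, ?_, ?_⟩
  · linarith
  · linarith
  · linarith
  · have hinv : 0 < 1 / p := one_div_pos.2 (by linarith)
    calc b * (2 * p - 2) = p - 1 / p := by rw [hb]; field_simp; ring
      _ ≤ p := by linarith
  · rw [hb, show 1 / 2 + 2 * (1 / (4 * p)) - (1 / 2 + 1 / (4 * p)) = 1 / (4 * p) by ring, hκ,
      div_mul_cancel₀ _ hquarter0.ne']
  · refine Real.one_le_rpow ?_ (by positivity)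
    rw [hκ, div_div_eq_mul_div]
    linarith
  · rw [Real.rpow_neg (by positivity), Real.rpow_inv_rpow (by positivity) hb0]
    field_simp
    norm_num

lemma smoothingConst_pos {m L : ℝ} (hm : 1 / 2 < m) (hL : 1 ≤ L) : 0 < smoothingConst m L := by
  have hm1 : 0 < 1 - 1 / (2 * m) := sub_pos.2 ((div_lt_one (by linarith)).2 (by linarith))
  have hcoeff : 0 ≤ (100 + (2 * (1 - 1 / (2 * m)))⁻¹) * √(L + 2) := by positivity
  rw [smoothingConst]
  linarith

/-- The Kolmogorov distance between the law of `Y` and the standard normal law. -/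
noncomputable def normalDistance {Ω : Type*} {_ : MeasurableSpace Ω} (μ : Measure Ω) (Y : Ω → ℝ) :
    ℝ :=
  ⨆ y, |μ.real {ω | Y ω ≤ y} - Φ y|

variable {Ω : Type*} {mΩ : MeasurableSpace Ω} {μ : Measure Ω}

lemma normalDistance_congr {Y Y' : Ω → ℝ} (h : Y =ᵐ[μ] Y') :
    normalDistance μ Y = normalDistance μ Y' := by
  refine iSup_congr fun y => ?_
  rw [measureReal_congr (eventuallyEq_set.2 (h.mono fun ω hω => ?_))]
  rw [Set.mem_ofPred_eq, Set.mem_ofPred_eq, hω]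

variable [IsProbabilityMeasure μ]

lemma abs_measureReal_sub_stdNormalCDF_le_one (Y : Ω → ℝ) (y : ℝ) :
    |μ.real {ω | Y ω ≤ y} - Φ y| ≤ 1 :=
  (abs_sub_le_of_le_of_le measureReal_nonneg measureReal_le_one (stdNormalCDF_nonneg y)
    (stdNormalCDF_le_one y)).trans_eq (sub_zero 1)

lemma normalDistance_le_one (Y : Ω → ℝ) : normalDistance μ Y ≤ 1 :=
  ciSup_le (abs_measureReal_sub_stdNormalCDF_le_one Y)

lemma abs_measureReal_sub_stdNormalCDF_le_normalDistance (Y : Ω → ℝ) (y : ℝ) :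
    |μ.real {ω | Y ω ≤ y} - Φ y| ≤ normalDistance μ Y := by
  refine le_ciSup (f := fun y => |μ.real {ω | Y ω ≤ y} - Φ y|) ⟨1, ?_⟩ y
  rintro _ ⟨z, rfl⟩
  exact abs_measureReal_sub_stdNormalCDF_le_one Y z

lemma normalDistance_sum_le {ℱ : Filtration ℕ mΩ} {T R : ℕ → Ω → ℝ} {n : ℕ} {p κ b m L ε : ℝ}
    (hP : LyapunovParams p κ b m) (hL : 1 ≤ L) (hκ : κ * L ^ (-b) ≤ 1 / 8)
    (hT : IsMartingaleDifference p μ ℱ T R) (hε0 : 0 < ε) (hε1 : ε ≤ 1)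
    (hR : ∀ ω, ∑ i ∈ range n, R i ω ≤ 1 + ε ^ 2)
    (hdev : μ.real {ω | ∑ i ∈ range n, R i ω < 1 - ε ^ 2} ≤ ε)
    (hpow : ∑ i ∈ range n, ∫ ω, (T i ω ^ 2) ^ p ∂μ ≤ ε ^ (2 * p + 1)) :
    normalDistance μ (fun ω => ∑ i ∈ range n, T i ω) ≤ 2 * smoothingConst m L * ε := by
  have hS : Measurable fun ω => ∑ i ∈ range n, T i ω :=
    Finset.measurable_fun_sum _ fun i _ => hT.measurable i
  have hhalf : normalDistance μ (fun ω => ∑ i ∈ range n, T i ω)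
      ≤ normalDistance μ (fun ω => ∑ i ∈ range n, T i ω) / 2 + smoothingConst m L * ε :=
    ciSup_le <| abs_measureReal_sum_sub_stdNormalCDF_le hP hL hT hε0 hε1 hR hpow hκ hdev
      fun z _ hr => measureReal_ball_le_of_abs_sub_stdNormalCDF_le hS
        (abs_measureReal_sub_stdNormalCDF_le_normalDistance _) z hr
  linarith

end Bootstrap

section Stopping

variable {Ω : Type*} {mΩ : MeasurableSpace Ω} {μ : Measure Ω}

/-- The indicator that the variance spent up to and including step `i` is within the budget `B`. -/
noncomputable def withinBudget (c : ℕ → Ω → ℝ) (B : ℝ) (i : ℕ) : Ω → ℝ :=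
  {ω | ∑ j ∈ range (i + 1), c j ω ≤ B}.indicator 1

lemma abs_withinBudget_le_one (c : ℕ → Ω → ℝ) (B : ℝ) (i : ℕ) (ω : Ω) :
    |withinBudget c B i ω| ≤ 1 := by
  by_cases h : ω ∈ {ω | ∑ j ∈ range (i + 1), c j ω ≤ B} <;> simp [withinBudget, h]

lemma sum_withinBudget_mul_le {c : ℕ → Ω → ℝ} {B : ℝ} (hB : 0 ≤ B) (hc : ∀ i ω, 0 ≤ c i ω) (n : ℕ)
    (ω : Ω) : ∑ i ∈ range n, withinBudget c B i ω ^ 2 * c i ω ≤ B := by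
  induction n with
  | zero => simpa using hB
  | succ n ih =>
    by_cases h : ∑ j ∈ range (n + 1), c j ω ≤ B
    · refine (sum_le_sum fun i _ => ?_).trans h
      refine mul_le_of_le_one_left (hc i ω) ((sq_le_one_iff_abs_le_one _).2 ?_)
      exact abs_withinBudget_le_one c B i ω
    · have hn : withinBudget c B n ω = 0 := Set.indicator_of_notMem (by exact h) 1
      rw [sum_range_succ, hn]
      linarith

namespace IsMartingaleDifference

variable {ℱ : Filtration ℕ mΩ} {p B : ℝ} {X c : ℕ → Ω → ℝ}
  (hX : IsMartingaleDifference p μ ℱ X c)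

include hX

lemma stronglyMeasurable_withinBudget (i : ℕ) : StronglyMeasurable[ℱ i] (withinBudget c B i) :=
  stronglyMeasurable_one.indicator
    (measurableSet_le (hX.measurable_sum_variance i) measurable_const)

lemma withinBudget_eq_one {ω : Ω} {n i : ℕ} (hn : ∑ j ∈ range n, c j ω ≤ B) (hi : i < n) :
    withinBudget c B i ω = 1 :=
  Set.indicator_of_mem (s := {ω | ∑ j ∈ range (i + 1), c j ω ≤ B})
    ((hX.sum_variance_mono hi ω).trans hn) 1

end IsMartingaleDifference

end Stopping

section Transfer

variable {Ω : Type*} {mΩ : MeasurableSpace Ω} {μ : Measure Ω}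

lemma measureReal_le_add_of_notMem_imp [IsFiniteMeasure μ] {A B G : Set Ω}
    (h : ∀ ω ∉ G, ω ∈ A → ω ∈ B) : μ.real A ≤ μ.real B + μ.real G := by
  refine (measureReal_mono fun ω hω => ?_).trans (measureReal_union_le B G)
  by_cases hG : ω ∈ G
  · exact Or.inr hG
  · exact Or.inl (h ω hG hω)

lemma normalDistance_le_add_measureReal [IsProbabilityMeasure μ] {Y Z : Ω → ℝ} {G : Set Ω}
    (h : ∀ ω ∉ G, Y ω = Z ω) : normalDistance μ Y ≤ normalDistance μ Z + μ.real G := by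
  refine ciSup_le fun y => ?_
  have hZ := abs_le.1 (abs_measureReal_sub_stdNormalCDF_le_normalDistance (μ := μ) Z y)
  have hYZ : μ.real {ω | Y ω ≤ y} ≤ μ.real {ω | Z ω ≤ y} + μ.real G :=
    measureReal_le_add_of_notMem_imp fun ω hω hY => (h ω hω).symm.trans_le hY
  have hZY : μ.real {ω | Z ω ≤ y} ≤ μ.real {ω | Y ω ≤ y} + μ.real G :=
    measureReal_le_add_of_notMem_imp fun ω hω hZ => (h ω hω).trans_le hZ
  rw [abs_le]
  constructor <;> linarith

end Transfer

theorem exists_normalDistance_sum_le {p : ℝ} (hp : 1 < p) :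
    ∃ C > 0, ∀ (Ω : Type u) (mΩ : MeasurableSpace Ω) (μ : Measure Ω) (_ : IsProbabilityMeasure μ)
      (ℱ : Filtration ℕ mΩ) (X c : ℕ → Ω → ℝ) (n : ℕ) (ε : ℝ),
      IsMartingaleDifference p μ ℱ X c → 0 < ε → ε ≤ 1 →
      μ.real {ω | ε ^ 2 < |∑ i ∈ range n, c i ω - 1|} ≤ ε →
      ∑ i ∈ range n, ∫ ω, (X i ω ^ 2) ^ p ∂μ ≤ ε ^ (2 * p + 1) →
      normalDistance μ (fun ω => ∑ i ∈ range n, X i ω) ≤ C * ε := by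
  obtain ⟨κ, b, m, L, hP, hL, hκ⟩ := exists_lyapunovParams hp
  have hC := smoothingConst_pos hP.half_lt_m hL
  refine ⟨2 * smoothingConst m L + 1, by linarith, ?_⟩
  intro Ω mΩ μ _ ℱ X c n ε hX hε0 hε1 hdev hpow
  set a : ℕ → Ω → ℝ := withinBudget c (1 + ε ^ 2)
  have ha_meas : ∀ i, StronglyMeasurable[ℱ i] (a i) := hX.stronglyMeasurable_withinBudget
  have ha_le : ∀ i ω, |a i ω| ≤ 1 := abs_withinBudget_le_one c _
  have hdev_le : ∀ ω ∉ {ω | ε ^ 2 < |∑ i ∈ range n, c i ω - 1|},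
      |∑ i ∈ range n, c i ω - 1| ≤ ε ^ 2 :=
    fun ω hω => by rwa [Set.mem_ofPred_eq, not_lt] at hω
  have ha_one : ∀ ω ∉ {ω | ε ^ 2 < |∑ i ∈ range n, c i ω - 1|}, ∀ i ∈ range n, a i ω = 1 :=
    fun ω hω i hi => hX.withinBudget_eq_one
      (by linarith [(abs_le.1 (hdev_le ω hω)).2]) (mem_range.1 hi)
  have hstopped := normalDistance_sum_le hP hL hκ (hX.predictable_mul hp.le ha_meas ha_le) hε0 hε1
    (sum_withinBudget_mul_le (by positivity) hX.variance_nonneg n)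
    ((measureReal_mono fun ω hω => by
      by_contra hgood
      have hsum : ∑ i ∈ range n, a i ω ^ 2 * c i ω = ∑ i ∈ range n, c i ω :=
        sum_congr rfl fun i hi => by rw [ha_one ω hgood i hi, one_pow, one_mul]
      have hω' : ∑ i ∈ range n, a i ω ^ 2 * c i ω < 1 - ε ^ 2 := hω
      rw [hsum] at hω'
      linarith [(abs_le.1 (hdev_le ω hgood)).1]).trans hdev)
    ((hX.sum_integral_predictable_mul_le hp.le ha_meas ha_le n).trans
      (by simpa only [one_pow, Real.one_rpow, one_mul] using hpow))
  have htransfer : normalDistance μ (fun ω => ∑ i ∈ range n, X i ω)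
      ≤ normalDistance μ (fun ω => ∑ i ∈ range n, a i ω * X i ω)
        + μ.real {ω | ε ^ 2 < |∑ i ∈ range n, c i ω - 1|} :=
    normalDistance_le_add_measureReal fun ω hω =>
      sum_congr rfl fun i hi => by rw [ha_one ω hω i hi, one_mul]
  linarith

/-! ### Concentration of the quadratic variation -/

section ExponentialSupermartingale

variable {Ω : Type*} {mΩ : MeasurableSpace Ω} {μ : Measure Ω} {ℱ : Filtration ℕ mΩ}

/-- The exponential process of an adapted sequence `g`, compensated so that it becomes a
supermartingale. As `1 + h ≤ exp h`, the linear compensator `E[exp (g i) | ℱ i] - 1` suffices. -/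
noncomputable def compensatedExp (μ : Measure Ω) (ℱ : Filtration ℕ mΩ) (g : ℕ → Ω → ℝ) (n : ℕ)
    (ω : Ω) : ℝ :=
  Real.exp (∑ i ∈ range n, (g i ω - (μ[fun ω' => Real.exp (g i ω') | ℱ i] ω - 1)))

lemma compensatedExp_succ (g : ℕ → Ω → ℝ) (n : ℕ) (ω : Ω) :
    compensatedExp μ ℱ g (n + 1) ω = compensatedExp μ ℱ g n ω *
      Real.exp (1 - μ[fun ω' => Real.exp (g n ω') | ℱ n] ω) * Real.exp (g n ω) := by
  rw [compensatedExp, sum_range_succ, compensatedExp, mul_assoc, ← Real.exp_add, ← Real.exp_add]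
  ring_nf

variable {g : ℕ → Ω → ℝ} (hg : ∀ i, Measurable[ℱ (i + 1)] (g i))
include hg

lemma measurable_compensatedExp (n : ℕ) : Measurable[ℱ n] (compensatedExp μ ℱ g n) := by
  refine Real.measurable_exp.comp (Finset.measurable_fun_sum _ fun i hi => ?_)
  have hin := mem_range.1 hi
  exact ((hg i).mono (ℱ.mono hin) le_rfl).sub
    ((stronglyMeasurable_condExp.measurable.mono (ℱ.mono hin.le) le_rfl).sub_const 1)

variable [IsFiniteMeasure μ] {M : ℝ} (hM : ∀ i ω, g i ω ≤ M)
include hM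

lemma integrable_exp_of_le (i : ℕ) : Integrable (fun ω => Real.exp (g i ω)) μ := by
  have hmeas : Measurable fun ω => Real.exp (g i ω) := ((hg i).mono (ℱ.le _) le_rfl).exp
  refine Integrable.of_bound (C := Real.exp M) hmeas.aestronglyMeasurable (ae_of_all _ fun ω => ?_)
  rw [Real.norm_eq_abs, Real.abs_exp]
  exact Real.exp_le_exp.2 (hM i ω)

lemma integrable_compensatedExp (n : ℕ) : Integrable (compensatedExp μ ℱ g n) μ := by
  have hmeas : Measurable (compensatedExp μ ℱ g n) :=
    (measurable_compensatedExp hg n).mono (ℱ.le n) le_rfl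
  have hnonneg : ∀ᵐ ω ∂μ, ∀ i, 0 ≤ μ[fun ω' => Real.exp (g i ω') | ℱ i] ω :=
    ae_all_iff.2 fun i => condExp_nonneg (ae_of_all _ fun ω => (Real.exp_pos _).le)
  refine Integrable.of_bound (C := Real.exp (n * (M + 1))) hmeas.aestronglyMeasurable ?_
  filter_upwards [hnonneg] with ω hω
  rw [compensatedExp, Real.norm_eq_abs, Real.abs_exp]
  refine Real.exp_le_exp.2 ((sum_le_card_nsmul _ _ (M + 1) fun i _ => ?_).trans_eq ?_)
  · linarith [hω i, hM i ω]
  · rw [card_range, nsmul_eq_mul]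

lemma integral_compensatedExp_succ_le (n : ℕ) :
    ∫ ω, compensatedExp μ ℱ g (n + 1) ω ∂μ ≤ ∫ ω, compensatedExp μ ℱ g n ω ∂μ := by
  set h : Ω → ℝ := μ[fun ω' => Real.exp (g n ω') | ℱ n]
  have hsucc := compensatedExp_succ (μ := μ) (ℱ := ℱ) g n
  have hmeas : StronglyMeasurable[ℱ n] fun ω =>
      compensatedExp μ ℱ g n ω * Real.exp (1 - h ω) :=
    ((measurable_compensatedExp hg n).mul
      (stronglyMeasurable_condExp.measurable.const_sub 1).exp).stronglyMeasurable
  have hint := (integrable_compensatedExp (μ := μ) hg hM (n + 1)).congr (ae_of_all _ hsucc)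
  have hpull := condExp_mul_ae_eq hmeas hint (integrable_exp_of_le hg hM n) ae_eq_rfl
  rw [integral_congr_ae (ae_of_all _ hsucc), ← integral_condExp (ℱ.le n),
    integral_congr_ae hpull]
  refine integral_mono (integrable_condExp.congr hpull) (integrable_compensatedExp hg hM n)
    fun ω => ?_
  have hexp : Real.exp (1 - h ω) * h ω ≤ 1 := by
    calc Real.exp (1 - h ω) * h ω ≤ Real.exp (1 - h ω) * Real.exp (h ω - 1) := by
          gcongr
          linarith [Real.add_one_le_exp (h ω - 1)]
      _ = 1 := by rw [← Real.exp_add, sub_add_sub_cancel', sub_self, Real.exp_zero]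
  simp only [mul_assoc]
  exact mul_le_of_le_one_right (Real.exp_pos _).le hexp

lemma integral_compensatedExp_le_measureReal_univ (n : ℕ) :
    ∫ ω, compensatedExp μ ℱ g n ω ∂μ ≤ μ.real Set.univ := by
  induction n with
  | zero => simp [compensatedExp]
  | succ n ih => exact (integral_compensatedExp_succ_le hg hM n).trans ih

lemma measureReal_le_sum_sub_condExp_le [IsProbabilityMeasure μ] {Y : ℕ → Ω → ℝ}
    (hY : ∀ i, Integrable (Y i) μ) (hexp : ∀ i ω, Real.exp (g i ω) ≤ 1 + Y i ω) (n : ℕ) (a : ℝ) :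
    μ.real {ω | a ≤ ∑ i ∈ range n, (g i ω - μ[Y i | ℱ i] ω)} ≤ Real.exp (-a) := by
  have hcond : ∀ᵐ ω ∂μ, ∀ i, μ[fun ω' => Real.exp (g i ω') | ℱ i] ω ≤ 1 + μ[Y i | ℱ i] ω := by
    refine ae_all_iff.2 fun i => ?_
    have hmono := condExp_mono (m := ℱ i) (integrable_exp_of_le hg hM i)
      ((integrable_const (1 : ℝ)).add (hY i)) (ae_of_all μ (hexp i))
    filter_upwards [hmono, condExp_add (integrable_const (1 : ℝ)) (hY i) (ℱ i)] with ω hle hadd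
    rwa [hadd, Pi.add_apply, condExp_const (ℱ.le i)] at hle
  have hsub : {ω | a ≤ ∑ i ∈ range n, (g i ω - μ[Y i | ℱ i] ω)} ≤ᵐ[μ]
      {ω | Real.exp a ≤ compensatedExp μ ℱ g n ω} := by
    filter_upwards [hcond] with ω hω hsum
    refine Real.exp_le_exp.2 (le_trans hsum (sum_le_sum fun i _ => ?_))
    linarith [hω i]
  have hmarkov := mul_meas_ge_le_integral_of_nonneg
    (ae_of_all μ fun ω => (Real.exp_pos _).le) (integrable_compensatedExp hg hM n) (Real.exp a)
  have hone := integral_compensatedExp_le_measureReal_univ (μ := μ) hg hM n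
  rw [probReal_univ] at hone
  rw [Real.exp_neg, ← one_div, le_div_iff₀' (Real.exp_pos a)]
  calc Real.exp a * μ.real {ω | a ≤ ∑ i ∈ range n, (g i ω - μ[Y i | ℱ i] ω)}
      ≤ Real.exp a * μ.real {ω | Real.exp a ≤ compensatedExp μ ℱ g n ω} :=
        mul_le_mul_of_nonneg_left
          (ENNReal.toReal_mono (measure_ne_top _ _) (measure_mono_ae hsub)) (Real.exp_pos a).le
    _ ≤ 1 := hmarkov.trans hone

end ExponentialSupermartingale

section Truncation

/-- The parameter `θ = ε ^ (-1 - 1 / (2 * p))` at which the exponential moment of the truncated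
quadratic variation is taken. It is chosen so that `θ ^ 2 * ε ^ (2 + 1 / p) = 1`. -/
noncomputable def exponentialRate (p ε : ℝ) : ℝ := ε ^ (-1 - 1 / (2 * p))

/-- The truncation of a squared increment `x` at level `ε ^ 2`, scaled by `exponentialRate p ε`. -/
noncomputable def scaledTruncation (p ε x : ℝ) : ℝ :=
  exponentialRate p ε * (Set.Iic (ε ^ 2)).indicator id x

variable {p ε x : ℝ}

lemma measurable_scaledTruncation : Measurable (scaledTruncation p ε) :=
  (measurable_id.indicator measurableSet_Iic).const_mul _

lemma scaledTruncation_of_le (hx : x ≤ ε ^ 2) :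
    scaledTruncation p ε x = exponentialRate p ε * x := by
  rw [scaledTruncation, Set.indicator_of_mem (Set.mem_Iic.2 hx), id]

lemma scaledTruncation_of_lt (hx : ε ^ 2 < x) : scaledTruncation p ε x = 0 := by
  rw [scaledTruncation, Set.indicator_of_notMem (by simpa using hx), mul_zero]

lemma exponentialRate_pos (hε0 : 0 < ε) : 0 < exponentialRate p ε := Real.rpow_pos_of_pos hε0 _

lemma exponentialRate_mul_self (hε0 : 0 < ε) :
    exponentialRate p ε * ε = ε ^ (-(1 / (2 * p))) := by
  rw [exponentialRate, ← Real.rpow_add_one hε0.ne']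
  congr 1
  ring

lemma exponentialRate_sq_mul_rpow (hp : p ≠ 0) (hε0 : 0 < ε) (z : ℝ) :
    exponentialRate p ε ^ 2 * ε ^ z = ε ^ (z - 2 - 1 / p) := by
  rw [exponentialRate, ← Real.rpow_mul_natCast hε0.le, ← Real.rpow_add hε0]
  congr 1
  field_simp
  ring

lemma exponentialRate_mul_sq_le_one (hp : 1 < p) (hε0 : 0 < ε) (hε1 : ε ≤ 1) :
    exponentialRate p ε * ε ^ 2 ≤ 1 := by
  have hp' : 1 / (2 * p) ≤ 1 := (div_le_one (by linarith)).2 (by linarith)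
  rw [exponentialRate, ← Real.rpow_add_natCast hε0.ne']
  exact Real.rpow_le_one hε0.le hε1 (by push_cast; linarith)

lemma abs_scaledTruncation_le_one (hp : 1 < p) (hε0 : 0 < ε) (hε1 : ε ≤ 1) (hx : 0 ≤ x) :
    |scaledTruncation p ε x| ≤ 1 := by
  rcases le_or_gt x (ε ^ 2) with hxε | hxε
  · rw [scaledTruncation_of_le hxε, abs_of_nonneg (mul_nonneg (exponentialRate_pos hε0).le hx)]
    exact (mul_le_mul_of_nonneg_left hxε (exponentialRate_pos hε0).le).trans
      (exponentialRate_mul_sq_le_one hp hε0 hε1)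
  · rw [scaledTruncation_of_lt hxε, abs_zero]
    exact zero_le_one

lemma scaledTruncation_le (hε0 : 0 < ε) (hx : 0 ≤ x) :
    scaledTruncation p ε x ≤ exponentialRate p ε * x := by
  rcases le_or_gt x (ε ^ 2) with hxε | hxε
  · exact (scaledTruncation_of_le hxε).le
  · rw [scaledTruncation_of_lt hxε]
    exact mul_nonneg (exponentialRate_pos hε0).le hx

lemma exponentialRate_mul_sub_le_scaledTruncation (hp : 1 < p) (hε0 : 0 < ε) (hε1 : ε ≤ 1)
    (hx : 0 ≤ x) :
    exponentialRate p ε * x - (x / ε ^ 2) ^ p ≤ scaledTruncation p ε x := by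
  rcases le_or_gt x (ε ^ 2) with hxε | hxε
  · rw [scaledTruncation_of_le hxε]
    exact sub_le_self _ (by positivity)
  · have hr : 1 ≤ x / ε ^ 2 := (one_le_div (by positivity)).2 hxε.le
    rw [scaledTruncation_of_lt hxε, sub_nonpos]
    calc exponentialRate p ε * x = exponentialRate p ε * ε ^ 2 * (x / ε ^ 2) := by field_simp
      _ ≤ x / ε ^ 2 := mul_le_of_le_one_left (by positivity)
          (exponentialRate_mul_sq_le_one hp hε0 hε1)
      _ ≤ (x / ε ^ 2) ^ p := Real.self_le_rpow_of_one_le hr hp.le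

lemma scaledTruncation_sq_le (hp : 1 < p) (hε0 : 0 < ε) (hε1 : ε ≤ 1) (hx : 0 ≤ x) :
    scaledTruncation p ε x ^ 2 ≤ x + (x / ε ^ 2) ^ p := by
  have hp0 : 0 < p := by linarith
  have hr0 : 0 ≤ x / ε ^ 2 := by positivity
  have hrp : 0 ≤ (x / ε ^ 2) ^ p := by positivity
  rcases le_or_gt x (ε ^ 2) with hxε | hxε
  swap
  · rw [scaledTruncation_of_lt hxε]
    linarith
  rw [scaledTruncation_of_le hxε, mul_pow]
  rcases le_or_gt ((x / ε ^ 2) ^ p) ε with hsmall | hlarge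
  · have hxle : x ≤ ε ^ (2 + 1 / p) := by
      have hr : x / ε ^ 2 ≤ ε ^ p⁻¹ := (Real.le_rpow_inv_iff_of_pos hr0 hε0.le hp0).2 hsmall
      rwa [div_le_iff₀' (by positivity), ← Real.rpow_natCast, ← Real.rpow_add hε0,
        ← one_div, Nat.cast_ofNat] at hr
    calc exponentialRate p ε ^ 2 * x ^ 2 ≤ exponentialRate p ε ^ 2 * ε ^ (2 + 1 / p) * x := by
          rw [sq x, mul_assoc]
          gcongr
      _ = x := by
          rw [exponentialRate_sq_mul_rpow hp0.ne' hε0, add_sub_cancel_left, sub_self,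
            Real.rpow_zero, one_mul]
      _ ≤ x + (x / ε ^ 2) ^ p := by linarith
  · have hp1 : 1 / p ≤ 1 := (div_le_one hp0).2 hp.le
    calc exponentialRate p ε ^ 2 * x ^ 2 ≤ exponentialRate p ε ^ 2 * ε ^ (4 : ℝ) := by
          gcongr
          calc x ^ 2 ≤ (ε ^ 2) ^ 2 := by gcongr
            _ = ε ^ (4 : ℝ) := by rw [← pow_mul, ← Real.rpow_natCast]; norm_num
      _ = ε ^ (4 - 2 - 1 / p) := exponentialRate_sq_mul_rpow hp0.ne' hε0 4
      _ ≤ ε ^ (1 : ℝ) := Real.rpow_le_rpow_of_exponent_ge hε0 hε1 (by linarith)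
      _ ≤ x + (x / ε ^ 2) ^ p := by rw [Real.rpow_one]; linarith

lemma exp_le_one_add_add_sq {u : ℝ} (hu : |u| ≤ 1) : Real.exp u ≤ 1 + u + u ^ 2 := by
  linarith [(abs_le.1 (Real.abs_exp_sub_one_sub_id_le hu)).2]

lemma exp_scaledTruncation_le (hp : 1 < p) (hε0 : 0 < ε) (hε1 : ε ≤ 1) (hx : 0 ≤ x) :
    Real.exp (scaledTruncation p ε x)
      ≤ 1 + ((exponentialRate p ε + 1) * x + 1 * (x / ε ^ 2) ^ p) := by
  linarith [exp_le_one_add_add_sq (abs_scaledTruncation_le_one hp hε0 hε1 hx),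
    scaledTruncation_le (p := p) hε0 hx, scaledTruncation_sq_le hp hε0 hε1 hx]

lemma exp_neg_scaledTruncation_le (hp : 1 < p) (hε0 : 0 < ε) (hε1 : ε ≤ 1) (hx : 0 ≤ x) :
    Real.exp (-scaledTruncation p ε x)
      ≤ 1 + ((1 - exponentialRate p ε) * x + 2 * (x / ε ^ 2) ^ p) := by
  have habs := abs_scaledTruncation_le_one hp hε0 hε1 hx
  rw [← abs_neg] at habs
  linarith [exp_le_one_add_add_sq habs, neg_sq (scaledTruncation p ε x),
    exponentialRate_mul_sub_le_scaledTruncation hp hε0 hε1 hx,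
    scaledTruncation_sq_le hp hε0 hε1 hx]

end Truncation

section QuadraticVariation

variable {Ω : Type*} {mΩ : MeasurableSpace Ω} {μ : Measure Ω}

lemma measureReal_one_lt_le_integral [IsFiniteMeasure μ] {f : Ω → ℝ} (hf : Integrable f μ)
    (h0 : 0 ≤ᵐ[μ] f) :
    μ.real {ω | 1 < f ω} ≤ ∫ ω, f ω ∂μ := by
  have hmarkov := mul_meas_ge_le_integral_of_nonneg h0 hf 1
  rw [one_mul] at hmarkov
  exact (measureReal_mono (Set.ofPred_subset_ofPred.2 fun ω hω => le_of_lt hω)).trans hmarkov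

lemma measureReal_one_lt_sum_le [IsFiniteMeasure μ] {f : ℕ → Ω → ℝ} (hf : ∀ i, Integrable (f i) μ)
    (h0 : ∀ i, 0 ≤ᵐ[μ] f i) (n : ℕ) :
    μ.real {ω | 1 < ∑ i ∈ range n, f i ω} ≤ ∑ i ∈ range n, ∫ ω, f i ω ∂μ := by
  rw [← integral_finsetSum _ fun i _ => hf i]
  refine measureReal_one_lt_le_integral (integrable_finsetSum _ fun i _ => hf i) ?_
  filter_upwards [ae_all_iff.2 h0] with ω hω
  exact sum_nonneg fun i _ => hω i

variable {ℱ : Filtration ℕ mΩ} {X c : ℕ → Ω → ℝ} {p ε : ℝ}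

/-- The conditional moment of order `2 * p` of `X i / ε` given `ℱ i`. -/
noncomputable def condMoment (μ : Measure Ω) (ℱ : Filtration ℕ mΩ) (X : ℕ → Ω → ℝ) (p ε : ℝ)
    (i : ℕ) : Ω → ℝ :=
  μ[fun ω => (X i ω ^ 2 / ε ^ 2) ^ p | ℱ i]

lemma integral_condMoment [IsFiniteMeasure μ] (i : ℕ) :
    ∫ ω, condMoment μ ℱ X p ε i ω ∂μ = ∫ ω, (X i ω ^ 2 / ε ^ 2) ^ p ∂μ :=
  integral_condExp (ℱ.le i)

lemma condMoment_nonneg (i : ℕ) : 0 ≤ᵐ[μ] condMoment μ ℱ X p ε i :=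
  condExp_nonneg (ae_of_all _ fun ω => Real.rpow_nonneg (by positivity) p)

lemma sum_integral_sq_div_rpow_le (hε0 : 0 < ε) {n : ℕ}
    (hpow : ∑ i ∈ range n, ∫ ω, (X i ω ^ 2) ^ p ∂μ ≤ ε ^ (2 * p + 1)) :
    ∑ i ∈ range n, ∫ ω, (X i ω ^ 2 / ε ^ 2) ^ p ∂μ ≤ ε := by
  have hsq : (ε ^ 2) ^ p = ε ^ (2 * p) := by
    rw [← Real.rpow_natCast, ← Real.rpow_mul hε0.le, Nat.cast_ofNat]
  simp only [Real.div_rpow (sq_nonneg _) (sq_nonneg _), integral_div, ← sum_div, hsq]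
  rw [div_le_iff₀ (Real.rpow_pos_of_pos hε0 _), mul_comm, ← Real.rpow_add_one hε0.ne']
  exact hpow

namespace IsMartingaleDifference

variable (hX : IsMartingaleDifference p μ ℱ X c)
include hX

lemma integrable_sq_div_rpow (i : ℕ) : Integrable (fun ω => (X i ω ^ 2 / ε ^ 2) ^ p) μ := by
  simp only [Real.div_rpow (sq_nonneg _) (sq_nonneg _)]
  exact (hX.integrable_sq_rpow i).div_const _

lemma condExp_linear_sq_rpow [IsFiniteMeasure μ] (hp : 1 ≤ p) (α β : ℝ) (i : ℕ) :
    μ[fun ω => α * X i ω ^ 2 + β * (X i ω ^ 2 / ε ^ 2) ^ p | ℱ i]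
      =ᵐ[μ] fun ω => α * c i ω + β * condMoment μ ℱ X p ε i ω := by
  have hadd := condExp_add ((hX.integrable_sq hp i).const_mul α)
    ((hX.integrable_sq_div_rpow (ε := ε) i).const_mul β) (ℱ i)
  have hα := condExp_smul (μ := μ) α (fun ω => X i ω ^ 2) (ℱ i)
  have hβ := condExp_smul (μ := μ) β (fun ω => (X i ω ^ 2 / ε ^ 2) ^ p) (ℱ i)
  filter_upwards [hadd, hα, hβ, hX.condExp_sq i] with ω hadd hα hβ hc
  rw [← hc]
  exact hadd.trans (congrArg₂ (· + ·) hα hβ)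

lemma measureReal_le_sum_sub_le [IsProbabilityMeasure μ] (hp : 1 ≤ p) {g : ℕ → Ω → ℝ} {M α β : ℝ}
    (hg : ∀ i, Measurable[ℱ (i + 1)] (g i)) (hM : ∀ i ω, g i ω ≤ M)
    (hexp : ∀ i ω, Real.exp (g i ω) ≤ 1 + (α * X i ω ^ 2 + β * (X i ω ^ 2 / ε ^ 2) ^ p))
    (n : ℕ) (a : ℝ) :
    μ.real {ω | a ≤ ∑ i ∈ range n, (g i ω - (α * c i ω + β * condMoment μ ℱ X p ε i ω))}
      ≤ Real.exp (-a) := by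
  have htail := measureReal_le_sum_sub_condExp_le (μ := μ) hg hM
    (fun i => ((hX.integrable_sq hp i).const_mul α).add
      ((hX.integrable_sq_div_rpow (ε := ε) i).const_mul β)) hexp n a
  refine (measureReal_congr ?_).trans_le htail
  filter_upwards [ae_all_iff.2 fun i => hX.condExp_linear_sq_rpow (ε := ε) hp α β i] with ω hω
  refine propext (Iff.of_eq (congrArg (a ≤ ·) (sum_congr rfl fun i _ => ?_)))
  rw [← hω i]
  rfl

variable [IsProbabilityMeasure μ] (hp : 1 < p) (hε0 : 0 < ε) (hε1 : ε ≤ 1)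
include hp hε0 hε1

lemma measureReal_le_sum_scaledTruncation_sub_le (n : ℕ) (a : ℝ) :
    μ.real {ω | a ≤ ∑ i ∈ range n, (scaledTruncation p ε (X i ω ^ 2)
      - ((exponentialRate p ε + 1) * c i ω + 1 * condMoment μ ℱ X p ε i ω))} ≤ Real.exp (-a) :=
  hX.measureReal_le_sum_sub_le hp.le
    (fun i => measurable_scaledTruncation.comp ((hX.stronglyMeasurable i).measurable.pow_const 2))
    (fun i ω => (abs_le.1 (abs_scaledTruncation_le_one hp hε0 hε1 (sq_nonneg (X i ω)))).2)
    (fun i ω => exp_scaledTruncation_le hp hε0 hε1 (sq_nonneg (X i ω))) n a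

lemma measureReal_le_sum_neg_scaledTruncation_sub_le (n : ℕ) (a : ℝ) :
    μ.real {ω | a ≤ ∑ i ∈ range n, (-scaledTruncation p ε (X i ω ^ 2)
      - ((1 - exponentialRate p ε) * c i ω + 2 * condMoment μ ℱ X p ε i ω))} ≤ Real.exp (-a) :=
  hX.measureReal_le_sum_sub_le hp.le
    (fun i => (measurable_scaledTruncation.comp
      ((hX.stronglyMeasurable i).measurable.pow_const 2)).neg)
    (fun i ω => neg_le.1 (abs_le.1 (abs_scaledTruncation_le_one hp hε0 hε1 (sq_nonneg (X i ω)))).1)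
    (fun i ω => exp_neg_scaledTruncation_le hp hε0 hε1 (sq_nonneg (X i ω))) n a

end IsMartingaleDifference

lemma sum_scaledTruncation_eq (hp : 0 < p) (hε0 : 0 < ε) {x : ℕ → ℝ} (hx : ∀ i, 0 ≤ x i) {n : ℕ}
    (hxp : ∑ i ∈ range n, (x i / ε ^ 2) ^ p ≤ 1) :
    ∑ i ∈ range n, scaledTruncation p ε (x i) = exponentialRate p ε * ∑ i ∈ range n, x i := by
  have hr : ∀ i, 0 ≤ x i / ε ^ 2 := fun i => div_nonneg (hx i) (sq_nonneg ε)
  rw [mul_sum]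
  refine sum_congr rfl fun i hi => scaledTruncation_of_le ?_
  have hle : (x i / ε ^ 2) ^ p ≤ 1 :=
    (single_le_sum (fun j _ => Real.rpow_nonneg (hr j) p) hi).trans hxp
  exact (div_le_one (by positivity)).1
    (le_of_not_gt fun hgt => (Real.one_lt_rpow hgt hp).not_ge hle)

lemma abs_sum_sub_sum_le_of_lt_tail (hp : 0 < p) (hε0 : 0 < ε) {x c w : ℕ → ℝ}
    (hx : ∀ i, 0 ≤ x i) {n : ℕ} (hxp : ∑ i ∈ range n, (x i / ε ^ 2) ^ p ≤ 1)
    (hw : ∑ i ∈ range n, w i ≤ 1) (hc : ∑ i ∈ range n, c i ≤ 2)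
    (hup : ∑ i ∈ range n, (scaledTruncation p ε (x i)
      - ((exponentialRate p ε + 1) * c i + 1 * w i)) < exponentialRate p ε * ε / 2 - 4)
    (hdown : ∑ i ∈ range n, (-scaledTruncation p ε (x i)
      - ((1 - exponentialRate p ε) * c i + 2 * w i)) < exponentialRate p ε * ε / 2 - 4) :
    |∑ i ∈ range n, x i - ∑ i ∈ range n, c i| ≤ ε / 2 := by
  have hθ := exponentialRate_pos (p := p) hε0
  simp only [sum_sub_distrib, sum_neg_distrib, sum_add_distrib, ← mul_sum,
    sum_scaledTruncation_eq hp hε0 hx hxp] at hup hdown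
  rw [abs_sub_le_iff]
  constructor <;> refine le_of_mul_le_mul_left ?_ hθ <;> linarith

namespace IsMartingaleDifference

theorem measureReal_abs_sum_sq_sub_sum_variance_le [IsProbabilityMeasure μ]
    (hX : IsMartingaleDifference p μ ℱ X c) (hp : 1 < p) (hε0 : 0 < ε) (hε1 : ε ≤ 1) {n : ℕ}
    (hpow : ∑ i ∈ range n, ∫ ω, (X i ω ^ 2) ^ p ∂μ ≤ ε ^ (2 * p + 1)) :
    μ.real {ω | ε / 2 < |∑ i ∈ range n, X i ω ^ 2 - ∑ i ∈ range n, c i ω|}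
      ≤ 2 * ε + 2 * Real.exp (4 - ε ^ (-(1 / (2 * p))) / 2)
        + μ.real {ω | 2 < ∑ i ∈ range n, c i ω} := by
  set a : ℝ := exponentialRate p ε * ε / 2 - 4 with ha
  have hea : -a = 4 - ε ^ (-(1 / (2 * p))) / 2 := by
    rw [ha, exponentialRate_mul_self hε0, neg_sub]
  have hsum := sum_integral_sq_div_rpow_le hε0 hpow
  have hx : μ.real {ω | 1 < ∑ i ∈ range n, (X i ω ^ 2 / ε ^ 2) ^ p} ≤ ε :=
    (measureReal_one_lt_sum_le hX.integrable_sq_div_rpow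
      (fun i => ae_of_all _ fun ω => Real.rpow_nonneg (by positivity) p) n).trans hsum
  have hw : μ.real {ω | 1 < ∑ i ∈ range n, condMoment μ ℱ X p ε i ω} ≤ ε :=
    (measureReal_one_lt_sum_le (fun i => integrable_condExp) condMoment_nonneg n).trans
      ((sum_congr rfl fun i _ => integral_condMoment i).trans_le hsum)
  have hup := hX.measureReal_le_sum_scaledTruncation_sub_le hp hε0 hε1 n a
  have hdown := hX.measureReal_le_sum_neg_scaledTruncation_sub_le hp hε0 hε1 n a
  rw [hea] at hup hdown
  set Bx : Set Ω := {ω | 1 < ∑ i ∈ range n, (X i ω ^ 2 / ε ^ 2) ^ p} with hBx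
  set Bw : Set Ω := {ω | 1 < ∑ i ∈ range n, condMoment μ ℱ X p ε i ω} with hBw
  set Bc : Set Ω := {ω | 2 < ∑ i ∈ range n, c i ω} with hBc
  set Bup : Set Ω := {ω | a ≤ ∑ i ∈ range n, (scaledTruncation p ε (X i ω ^ 2)
    - ((exponentialRate p ε + 1) * c i ω + 1 * condMoment μ ℱ X p ε i ω))} with hBup
  set Bdown : Set Ω := {ω | a ≤ ∑ i ∈ range n, (-scaledTruncation p ε (X i ω ^ 2)
    - ((1 - exponentialRate p ε) * c i ω + 2 * condMoment μ ℱ X p ε i ω))} with hBdown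
  have hcover : {ω | ε / 2 < |∑ i ∈ range n, X i ω ^ 2 - ∑ i ∈ range n, c i ω|}
      ⊆ Bx ∪ Bw ∪ Bup ∪ Bdown ∪ Bc := by
    intro ω hω
    contrapose! hω
    simp only [Set.mem_union, not_or, hBx, hBw, hBc, hBup, hBdown, Set.mem_ofPred_eq, not_lt,
      not_le] at hω
    obtain ⟨⟨⟨⟨hωx, hωw⟩, hωup⟩, hωdown⟩, hωc⟩ := hω
    rw [Set.mem_ofPred_eq, not_lt]
    exact abs_sum_sub_sum_le_of_lt_tail (by linarith) hε0 (fun i => sq_nonneg (X i ω)) hωx hωw hωc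
      hωup hωdown
  linarith [measureReal_mono (μ := μ) hcover, measureReal_union_le (μ := μ) Bx Bw,
    measureReal_union_le (μ := μ) (Bx ∪ Bw) Bup,
    measureReal_union_le (μ := μ) (Bx ∪ Bw ∪ Bup) Bdown,
    measureReal_union_le (μ := μ) (Bx ∪ Bw ∪ Bup ∪ Bdown) Bc]

end IsMartingaleDifference

end QuadraticVariation

/-! ### The interpolated normalization -/

section Ratio

variable {Ω : Type*} {mΩ : MeasurableSpace Ω} {μ : Measure Ω} [IsProbabilityMeasure μ] {ε δ : ℝ}

lemma exists_abs_stdNormalCDF_sub_le_of_abs_log_le (hδ : 0 ≤ δ) (x : ℝ) :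
    ∃ y z, |Φ y - Φ x| ≤ δ ∧ |Φ z - Φ x| ≤ δ ∧
      ∀ r, 0 < r → |Real.log r| ≤ δ → y ≤ x * r ∧ x * r ≤ z := by
  have hlow : |Φ (x * Real.exp (-δ)) - Φ x| ≤ δ := by
    simpa [abs_of_nonneg hδ] using abs_stdNormalCDF_mul_sub_le_abs_log (Real.exp_pos (-δ)) x
  have hhigh : |Φ (x * Real.exp δ) - Φ x| ≤ δ := by
    simpa [abs_of_nonneg hδ] using abs_stdNormalCDF_mul_sub_le_abs_log (Real.exp_pos δ) x
  have hr_mem : ∀ r, 0 < r → |Real.log r| ≤ δ → Real.exp (-δ) ≤ r ∧ r ≤ Real.exp δ :=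
    fun r hr hlog => ⟨(Real.le_log_iff_exp_le hr).1 (abs_le.1 hlog).1,
      (Real.log_le_iff_le_exp hr).1 (abs_le.1 hlog).2⟩
  rcases le_total 0 x with hx | hx
  · exact ⟨_, _, hlow, hhigh, fun r hr hlog =>
      ⟨mul_le_mul_of_nonneg_left (hr_mem r hr hlog).1 hx,
        mul_le_mul_of_nonneg_left (hr_mem r hr hlog).2 hx⟩⟩
  · exact ⟨_, _, hhigh, hlow, fun r hr hlog =>
      ⟨mul_le_mul_of_nonpos_left (hr_mem r hr hlog).2 hx,
        mul_le_mul_of_nonpos_left (hr_mem r hr hlog).1 hx⟩⟩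

lemma normalDistance_div_le {Y s : Ω → ℝ} {G : Set Ω} (hδ : 0 ≤ δ)
    (hs : ∀ ω ∉ G, 0 < s ω ∧ |Real.log (s ω)| ≤ δ) :
    normalDistance μ (fun ω => Y ω / s ω) ≤ normalDistance μ Y + μ.real G + δ := by
  refine ciSup_le fun x => ?_
  obtain ⟨y, z, hy, hz, hyz⟩ := exists_abs_stdNormalCDF_sub_le_of_abs_log_le hδ x
  have hlow : μ.real {ω | Y ω ≤ y} ≤ μ.real {ω | Y ω / s ω ≤ x} + μ.real G :=
    measureReal_le_add_of_notMem_imp fun ω hω hY =>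
      (div_le_iff₀ (hs ω hω).1).2 (le_trans hY (hyz _ (hs ω hω).1 (hs ω hω).2).1)
  have hhigh : μ.real {ω | Y ω / s ω ≤ x} ≤ μ.real {ω | Y ω ≤ z} + μ.real G :=
    measureReal_le_add_of_notMem_imp fun ω hω hY =>
      ((div_le_iff₀ (hs ω hω).1).1 hY).trans (hyz _ (hs ω hω).1 (hs ω hω).2).2
  have hYy := abs_le.1 (abs_measureReal_sub_stdNormalCDF_le_normalDistance (μ := μ) Y y)
  have hYz := abs_le.1 (abs_measureReal_sub_stdNormalCDF_le_normalDistance (μ := μ) Y z)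
  have hy' := abs_le.1 hy
  have hz' := abs_le.1 hz
  rw [abs_le]
  constructor <;> linarith

lemma abs_log_sqrt_le {V : ℝ} (hε : ε ≤ 1 / 2) (hV : |V - 1| ≤ ε) : |Real.log √V| ≤ ε := by
  obtain ⟨hlow, hhigh⟩ := abs_le.1 hV
  have hV0 : 0 < V := by linarith
  have hinv : V⁻¹ ≤ 1 + 2 * ε := by
    rw [inv_le_iff_one_le_mul₀ hV0]
    nlinarith
  rw [Real.log_sqrt hV0.le, abs_le]
  constructor
  · linarith [Real.one_sub_inv_le_log_of_pos hV0]
  · linarith [Real.log_le_sub_one_of_pos hV0]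

lemma sqrt_pos_and_abs_log_sqrt_le {t Q R : ℝ} (ht0 : 0 ≤ t) (ht1 : t ≤ 1) (hε0 : 0 < ε)
    (hε : ε ≤ 1 / 2) (hR : |R - 1| ≤ ε ^ 2) (hQR : |Q - R| ≤ ε / 2) :
    0 < √(t * R + (1 - t) * Q) ∧ |Real.log √(t * R + (1 - t) * Q)| ≤ ε := by
  have hV : |t * R + (1 - t) * Q - 1| ≤ ε := by
    calc |t * R + (1 - t) * Q - 1| = |(R - 1) + (1 - t) * (Q - R)| := by ring_nf
      _ ≤ |R - 1| + |(1 - t) * (Q - R)| := abs_add_le _ _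
      _ ≤ ε ^ 2 + ε / 2 := by
          rw [abs_mul, abs_of_nonneg (sub_nonneg.2 ht1)]
          gcongr
          exact (mul_le_of_le_one_left (abs_nonneg _) (by linarith)).trans hQR
      _ ≤ ε := by nlinarith
  exact ⟨Real.sqrt_pos.2 (by linarith [(abs_le.1 hV).1]), abs_log_sqrt_le hε hV⟩

lemma exists_exp_sub_rpow_div_two_le {p : ℝ} (hp : 0 < p) :
    ∃ C > 0, ∀ ε : ℝ, 0 < ε → ε ≤ 1 → Real.exp (4 - ε ^ (-(1 / (2 * p))) / 2) ≤ C * ε := by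
  set k := ⌈2 * p⌉₊
  refine ⟨Real.exp 4 * (2 ^ k * k.factorial), by positivity, fun ε hε0 hε1 => ?_⟩
  set u := ε ^ (-(1 / (2 * p))) with hu
  have hu1 : 1 ≤ u :=
    Real.one_le_rpow_of_pos_of_le_one_of_nonpos hε0 hε1 (neg_nonpos.2 (by positivity))
  have hinv : ε⁻¹ ≤ u ^ k := by
    calc ε⁻¹ = u ^ (2 * p) := by
          rw [hu, ← Real.rpow_mul hε0.le, ← Real.rpow_neg_one]
          congr 1
          field_simp
      _ ≤ u ^ (k : ℝ) := Real.rpow_le_rpow_of_exponent_le hu1 (Nat.le_ceil _)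
      _ = u ^ k := Real.rpow_natCast u k
  have hexp : u ^ k ≤ Real.exp (u / 2) * (2 ^ k * k.factorial) := by
    have htaylor := Real.pow_div_factorial_le_exp (u / 2) (by positivity) k
    rwa [div_pow, div_div, div_le_iff₀ (by positivity)] at htaylor
  have hε : 1 ≤ Real.exp (u / 2) * (2 ^ k * k.factorial) * ε :=
    (inv_le_iff_one_le_mul₀ hε0).1 (hinv.trans hexp)
  rw [Real.exp_sub, div_le_iff₀ (Real.exp_pos _)]
  linarith [mul_le_mul_of_nonneg_left hε (Real.exp_pos 4).le]

end Ratio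

theorem exists_normalDistance_sum_div_sqrt_le {p : ℝ} (hp : 1 < p) :
    ∃ C > 0, ∀ (Ω : Type u) (mΩ : MeasurableSpace Ω) (μ : Measure Ω) (_ : IsProbabilityMeasure μ)
      (ℱ : Filtration ℕ mΩ) (X c : ℕ → Ω → ℝ) (n : ℕ) (ε t : ℝ),
      IsMartingaleDifference p μ ℱ X c → 0 < ε → 0 ≤ t → t ≤ 1 →
      μ.real {ω | ε ^ 2 < |∑ i ∈ range n, c i ω - 1|} ≤ ε →
      ∑ i ∈ range n, ∫ ω, (X i ω ^ 2) ^ p ∂μ ≤ ε ^ (2 * p + 1) →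
      normalDistance μ (fun ω => (∑ i ∈ range n, X i ω) /
        √(t * ∑ i ∈ range n, c i ω + (1 - t) * ∑ i ∈ range n, X i ω ^ 2)) ≤ C * ε := by
  obtain ⟨C, hC, hsum⟩ := exists_normalDistance_sum_le.{u} hp
  obtain ⟨D, hD, hexp⟩ := exists_exp_sub_rpow_div_two_le (by linarith : 0 < p)
  refine ⟨C + 2 * D + 5, by positivity, ?_⟩
  intro Ω mΩ μ _ ℱ X c n ε t hX hε0 ht0 ht1 hdev hpow
  rcases lt_or_ge (1 / 2) ε with hε | hε
  · refine (normalDistance_le_one _).trans ?_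
    linarith [mul_pos hC hε0, mul_pos hD hε0]
  have hε1 : ε ≤ 1 := by linarith
  set G : Set Ω := {ω | ε ^ 2 < |∑ i ∈ range n, c i ω - 1|} with hG
  set H : Set Ω := {ω | ε / 2 < |∑ i ∈ range n, X i ω ^ 2 - ∑ i ∈ range n, c i ω|} with hH
  have hbudget : μ.real {ω | 2 < ∑ i ∈ range n, c i ω} ≤ μ.real G := by
    refine measureReal_mono fun ω hω => ?_
    rw [Set.mem_ofPred_eq] at hω
    rw [hG, Set.mem_ofPred_eq, lt_abs]
    exact Or.inl (by nlinarith)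
  have hquad := hX.measureReal_abs_sum_sq_sub_sum_variance_le hp hε0 hε1 hpow
  have hratio := normalDistance_div_le (μ := μ) (Y := fun ω => ∑ i ∈ range n, X i ω)
    (s := fun ω => √(t * ∑ i ∈ range n, c i ω + (1 - t) * ∑ i ∈ range n, X i ω ^ 2))
    (G := G ∪ H) hε0.le fun ω hω => by
      rw [Set.mem_union, not_or, hG, hH, Set.mem_ofPred_eq, Set.mem_ofPred_eq, not_lt, not_lt] at hω
      exact sqrt_pos_and_abs_log_sqrt_le ht0 ht1 hε0 hε hω.1 hω.2
  linarith [hsum Ω mΩ μ ‹_› ℱ X c n ε hX hε0 hε1 hdev hpow, hexp ε hε0 hε1,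
    measureReal_union_le (μ := μ) G H]

section Moments

variable {Ω : Type*} {mΩ : MeasurableSpace Ω} {μ : Measure Ω} [IsProbabilityMeasure μ]
  {ℱ : Filtration ℕ mΩ} {p : ℝ} {X c : ℕ → Ω → ℝ}

namespace IsMartingaleDifference

variable (hX : IsMartingaleDifference p μ ℱ X c) (hp : 1 ≤ p)

include hX hp

lemma integrable_abs_sum_variance_sub_one_rpow (n : ℕ) :
    Integrable (fun ω => |∑ i ∈ range n, c i ω - 1| ^ p) μ := by
  have hp0 : 0 < p := by linarith
  have hexp : (ENNReal.ofReal p).toReal = p := ENNReal.toReal_ofReal hp0.le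
  have hne : ENNReal.ofReal p ≠ 0 := (ENNReal.ofReal_pos.2 hp0).ne'
  have hc (i : ℕ) : MemLp (c i) (ENNReal.ofReal p) μ := by
    refine (integrable_norm_rpow_iff (hX.measurable_variance i).aestronglyMeasurable hne
      ENNReal.ofReal_ne_top).1 ?_
    simpa only [hexp, Real.norm_of_nonneg (hX.variance_nonneg i _)] using
      hX.integrable_variance_rpow hp i
  have hsum := (memLp_finsetSum (range n) fun i _ => hc i).sub (memLp_const (1 : ℝ))
  simpa only [hexp, Real.norm_eq_abs, Pi.sub_apply] using
    hsum.integrable_norm_rpow hne ENNReal.ofReal_ne_top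

lemma measureReal_sq_lt_abs_sum_variance_sub_one_le {n : ℕ} {ε : ℝ} (hε : 0 < ε)
    (hdev : ∫ ω, |∑ i ∈ range n, c i ω - 1| ^ p ∂μ ≤ ε ^ (2 * p + 1)) :
    μ.real {ω | ε ^ 2 < |∑ i ∈ range n, c i ω - 1|} ≤ ε := by
  have hpow : 0 < ε ^ (2 * p) := Real.rpow_pos_of_pos hε _
  have hset : {ω | ε ^ 2 < |∑ i ∈ range n, c i ω - 1|}
      ⊆ {ω | 1 < |∑ i ∈ range n, c i ω - 1| ^ p / ε ^ (2 * p)} := fun ω hω => by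
    rw [Set.mem_ofPred_eq, one_lt_div hpow, Real.rpow_mul hε.le, Real.rpow_two]
    exact Real.rpow_lt_rpow (sq_nonneg ε) hω (by linarith)
  calc μ.real {ω | ε ^ 2 < |∑ i ∈ range n, c i ω - 1|}
      ≤ ∫ ω, |∑ i ∈ range n, c i ω - 1| ^ p / ε ^ (2 * p) ∂μ :=
        (measureReal_mono hset).trans <| measureReal_one_lt_le_integral
          ((hX.integrable_abs_sum_variance_sub_one_rpow hp n).div_const _)
          (ae_of_all _ fun ω => by positivity)
    _ ≤ ε := by
        rw [integral_div, div_le_iff₀ hpow]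
        rwa [Real.rpow_add hε, Real.rpow_one, mul_comm] at hdev

end IsMartingaleDifference

end Moments

lemma le_mul_rpow_one_div_of_forall_pos {a C N q : ℝ} (hN : 0 ≤ N) (hq : 0 < q)
    (h : ∀ ε : ℝ, 0 < ε → N ≤ ε ^ q → a ≤ C * ε) : a ≤ C * N ^ (1 / q) := by
  have htendsto : Tendsto (fun ε => C * ε) (nhdsWithin (N ^ (1 / q)) (Set.Ioi (N ^ (1 / q))))
      (nhds (C * N ^ (1 / q))) :=
    ((continuous_const_mul C).tendsto _).mono_left nhdsWithin_le_nhds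
  refine ge_of_tendsto htendsto ?_
  filter_upwards [self_mem_nhdsWithin] with ε hε
  have hε0 : 0 < ε := (Real.rpow_nonneg hN _).trans_lt hε
  refine h ε hε0 ?_
  rw [← Real.rpow_inv_le_iff_of_pos hN hε0.le hq, ← one_div]
  exact hε.le

theorem exists_normalDistance_sum_div_sqrt_le_rpow {p : ℝ} (hp : 1 < p) :
    ∃ C > 0, ∀ (Ω : Type u) (mΩ : MeasurableSpace Ω) (μ : Measure Ω) (_ : IsProbabilityMeasure μ)
      (ℱ : Filtration ℕ mΩ) (X c : ℕ → Ω → ℝ) (n : ℕ) (t : ℝ),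
      IsMartingaleDifference p μ ℱ X c → 0 ≤ t → t ≤ 1 →
      normalDistance μ (fun ω => (∑ i ∈ range n, X i ω) /
        √(t * ∑ i ∈ range n, c i ω + (1 - t) * ∑ i ∈ range n, X i ω ^ 2))
        ≤ C * (∑ i ∈ range n, ∫ ω, (X i ω ^ 2) ^ p ∂μ
          + ∫ ω, |∑ i ∈ range n, c i ω - 1| ^ p ∂μ) ^ (1 / (2 * p + 1)) := by
  obtain ⟨C, hC, hbound⟩ := exists_normalDistance_sum_div_sqrt_le.{u} hp
  refine ⟨C, hC, fun Ω mΩ μ _ ℱ X c n t hX ht0 ht1 => ?_⟩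
  have hmoment : 0 ≤ ∑ i ∈ range n, ∫ ω, (X i ω ^ 2) ^ p ∂μ := by positivity
  have hdeviation : 0 ≤ ∫ ω, |∑ i ∈ range n, c i ω - 1| ^ p ∂μ := by positivity
  refine le_mul_rpow_one_div_of_forall_pos (by positivity) (by linarith) fun ε hε hN => ?_
  exact hbound Ω mΩ μ ‹_› ℱ X c n ε t hX hε ht0 ht1
    (hX.measureReal_sq_lt_abs_sum_variance_sub_one_le hp.le hε (by linarith)) (by linarith)

section Reindexing

variable {Ω : Type*} {mΩ : MeasurableSpace Ω} {μ : Measure Ω}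

/-- The differences `X 1, …, X n` with their index lowered by one, as in `IsMartingaleDifference`,
and extended by zero. -/
def shiftedDifference (n : ℕ) (X : ℕ → Ω → ℝ) (i : ℕ) : Ω → ℝ :=
  if i < n then X (i + 1) else 0

lemma sum_Icc_one_eq_sum_range (f : ℕ → ℝ) (n : ℕ) :
    ∑ i ∈ Icc 1 n, f i = ∑ i ∈ range n, f (i + 1) := by
  induction n with
  | zero => simp
  | succ k ih => rw [sum_Icc_succ_top (by omega), ih, sum_range_succ]

lemma sum_Icc_one_eq_sum_range_shiftedDifference (n : ℕ) (X : ℕ → Ω → ℝ)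
    (f : ℕ → (Ω → ℝ) → ℝ) :
    ∑ i ∈ Icc 1 n, f (i - 1) (X i) = ∑ i ∈ range n, f i (shiftedDifference n X i) := by
  rw [sum_Icc_one_eq_sum_range]
  refine sum_congr rfl fun i hi => ?_
  rw [shiftedDifference, if_pos (mem_range.1 hi), Nat.add_sub_cancel]

lemma abs_rpow_two_mul (x p : ℝ) : |x| ^ (2 * p) = (x ^ 2) ^ p := by
  rw [Real.rpow_mul (abs_nonneg x), Real.rpow_two, sq_abs]

lemma condExp_sq_ae_eq_sup_zero (Z : Ω → ℝ) (m : MeasurableSpace Ω) :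
    μ[fun ω => Z ω ^ 2 | m] =ᵐ[μ] μ[fun ω => Z ω ^ 2 | m] ⊔ 0 := by
  have hnonneg : 0 ≤ᵐ[μ] μ[fun ω => Z ω ^ 2 | m] :=
    condExp_nonneg (ae_of_all _ fun ω => sq_nonneg _)
  filter_upwards [hnonneg] with ω hω
  exact (sup_eq_left.2 hω).symm

lemma isMartingaleDifference_shiftedDifference {ℱ : Filtration ℕ mΩ} {p : ℝ} {n : ℕ}
    {X : ℕ → Ω → ℝ} (hp : 0 < p) (hmeas : ∀ i ∈ Icc 1 n, StronglyMeasurable[ℱ i] (X i))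
    (hcond : ∀ i ∈ Icc 1 n, μ[X i | ℱ (i - 1)] =ᵐ[μ] 0)
    (hint : ∀ i ∈ Icc 1 n, Integrable (fun ω => |X i ω| ^ (2 * p)) μ) :
    IsMartingaleDifference p μ ℱ (shiftedDifference n X)
      fun i => μ[fun ω => shiftedDifference n X i ω ^ 2 | ℱ i] ⊔ 0 := by
  have hcases {P : ℕ → (Ω → ℝ) → Prop} (hP : ∀ i ∈ Icc 1 n, P (i - 1) (X i)) (h0 : ∀ i, P i 0)
      (i : ℕ) : P i (shiftedDifference n X i) := by
    by_cases hi : i < n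
    · rw [shiftedDifference, if_pos hi]
      exact hP (i + 1) (mem_Icc.2 ⟨by omega, hi⟩)
    · rw [shiftedDifference, if_neg hi]
      exact h0 i
  refine ⟨hcases (P := fun i Z => StronglyMeasurable[ℱ (i + 1)] Z) (fun i hi => ?_)
      fun i => stronglyMeasurable_zero,
    hcases (P := fun _ Z => Integrable (fun ω => (Z ω ^ 2) ^ p) μ) (fun i hi => ?_) fun _ => ?_,
    hcases (P := fun i Z => μ[Z | ℱ i] =ᵐ[μ] 0) hcond fun i => by rw [condExp_zero],
    fun i => (stronglyMeasurable_condExp.measurable.sup measurable_const).stronglyMeasurable,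
    fun i ω => le_sup_right, fun i => condExp_sq_ae_eq_sup_zero _ _⟩
  · rw [Nat.sub_add_cancel (mem_Icc.1 hi).1]
    exact hmeas i hi
  · simpa only [abs_rpow_two_mul] using hint i hi
  · simp [hp.ne']

end Reindexing

end MartingaleBerryEsseen

open MartingaleBerryEsseen in
theorem stmt2_general.{u} {p : ℝ} (hp : 1 < p) :
    ∃ C > 0, ∀ (Ω : Type u) (mΩ : MeasurableSpace Ω) (μ : Measure Ω) (_ : IsProbabilityMeasure μ)
      (ℱ : Filtration ℕ mΩ) (n : ℕ) (X : ℕ → Ω → ℝ),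
      (∀ i ∈ Icc 1 n, StronglyMeasurable[ℱ i] (X i)) →
      (∀ i ∈ Icc 1 n, μ[X i | ℱ (i - 1)] =ᵐ[μ] 0) →
      (∀ i ∈ Icc 1 n, Integrable (fun ω => |X i ω| ^ (2 * p)) μ) →
      ∀ t : ℝ, 0 ≤ t → t ≤ 1 → ∀ x : ℝ,
        |μ.real {ω | (∑ i ∈ Icc 1 n, X i ω) /
            √(t * ∑ i ∈ Icc 1 n, (μ[fun ω' => X i ω' ^ 2 | ℱ (i - 1)]) ω
              + (1 - t) * ∑ i ∈ Icc 1 n, X i ω ^ 2) ≤ x} - stdNormalCDF x|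
          ≤ C * (∑ i ∈ Icc 1 n, ∫ ω, |X i ω| ^ (2 * p) ∂μ
            + ∫ ω, |∑ i ∈ Icc 1 n, (μ[fun ω' => X i ω' ^ 2 | ℱ (i - 1)]) ω - 1| ^ p ∂μ)
              ^ (1 / (2 * p + 1)) := by
  obtain ⟨C, hC, hbound⟩ := exists_normalDistance_sum_div_sqrt_le_rpow.{u} hp
  refine ⟨C, hC, fun Ω mΩ μ _ ℱ n X hmeas hcond hint t ht0 ht1 x => ?_⟩
  have hX := isMartingaleDifference_shiftedDifference (by linarith) hmeas hcond hint
  have hvariance : ∀ᵐ ω ∂μ, ∑ i ∈ Icc 1 n, (μ[fun ω' => X i ω' ^ 2 | ℱ (i - 1)]) ω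
      = ∑ i ∈ range n, (μ[fun ω' => shiftedDifference n X i ω' ^ 2 | ℱ i] ⊔ 0) ω := by
    filter_upwards [ae_all_iff.2 hX.condExp_sq] with ω hω
    rw [sum_Icc_one_eq_sum_range_shiftedDifference n X fun i Z => (μ[fun ω' => Z ω' ^ 2 | ℱ i]) ω]
    exact sum_congr rfl fun i _ => hω i
  have hratio : (fun ω => (∑ i ∈ Icc 1 n, X i ω) /
        √(t * ∑ i ∈ Icc 1 n, (μ[fun ω' => X i ω' ^ 2 | ℱ (i - 1)]) ω
          + (1 - t) * ∑ i ∈ Icc 1 n, X i ω ^ 2))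
      =ᵐ[μ] fun ω => (∑ i ∈ range n, shiftedDifference n X i ω) /
        √(t * ∑ i ∈ range n, (μ[fun ω' => shiftedDifference n X i ω' ^ 2 | ℱ i] ⊔ 0) ω
          + (1 - t) * ∑ i ∈ range n, shiftedDifference n X i ω ^ 2) := by
    filter_upwards [hvariance] with ω hω
    rw [hω, sum_Icc_one_eq_sum_range_shiftedDifference n X fun _ Z => Z ω,
      sum_Icc_one_eq_sum_range_shiftedDifference n X fun _ Z => Z ω ^ 2]
  refine (abs_measureReal_sub_stdNormalCDF_le_normalDistance _ x).trans ?_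
  simp only [abs_rpow_two_mul]
  rw [normalDistance_congr hratio,
    sum_Icc_one_eq_sum_range_shiftedDifference n X fun _ Z => ∫ ω, (Z ω ^ 2) ^ p ∂μ,
    integral_congr_ae (hvariance.mono fun ω hω => by rw [hω])]
  exact hbound Ω mΩ μ ‹_› ℱ _ _ n t hX ht0 ht1

theorem stmt2 (p : ℝ) (hp : 1 < p) :
    ∃ C : ℝ, 0 < C ∧
      ∀ (Ω : Type) (mΩ : MeasurableSpace Ω) (μ : Measure Ω),
        IsProbabilityMeasure μ →
        ∀ (ℱ : Filtration ℕ mΩ), ℱ 0 = ⊥ →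
        ∀ (n : ℕ) (X : ℕ → Ω → ℝ), X 0 = 0 →
        (∀ i, StronglyMeasurable[ℱ i] (X i)) →
        (∀ i, Integrable (X i) μ) →
        (∀ i ∈ Finset.Icc 1 n, μ[X i | ℱ (i - 1)] =ᵐ[μ] (0 : Ω → ℝ)) →
        ∀ (S : ℕ → Ω → ℝ), (∀ k ω, S k ω = ∑ i ∈ Finset.Icc 1 k, X i ω) →
        ∀ (QV CV : Ω → ℝ),
          (∀ ω, QV ω = ∑ i ∈ Finset.Icc 1 n, (X i ω) ^ 2) →
          (∀ ω, CV ω = ∑ i ∈ Finset.Icc 1 n, (μ[fun ω' => (X i ω') ^ 2 | ℱ (i - 1)]) ω) →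
        (∫ ω, (S n ω) ^ 2 ∂μ) = 1 →
        (∀ i ∈ Finset.Icc 1 n, Integrable (fun ω => |X i ω| ^ (2 * p)) μ) →
        ∀ (N : ℝ),
          N = (∑ i ∈ Finset.Icc 1 n, ∫ ω, |X i ω| ^ (2 * p) ∂μ) + (∫ ω, |CV ω - 1| ^ p ∂μ) →
      ∀ t : ℝ, 0 ≤ t → t ≤ 1 →
      ∀ x : ℝ,
        |(μ {ω | S n ω / Real.sqrt (t * CV ω + (1 - t) * QV ω) ≤ x}).toReal
          - stdNormalCDF x| ≤ C * N ^ (1 / (2 * p + 1)) := by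
  obtain ⟨C, hC, hbound⟩ := stmt2_general.{0} hp
  refine ⟨C, hC, fun Ω mΩ μ hμ ℱ _ n X _ hX _ hcond S hS QV CV hQV hCV _ hint N hN t ht0 ht1 x =>
    ?_⟩
  simpa only [hS, hQV, hCV, hN, Measure.real] using
    hbound Ω mΩ μ hμ ℱ n X (fun i _ => hX i) hcond hint t ht0 ht1 x
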